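/- arXiv:2405.00206 — 4 statements merged into one kernel-verified Lean document; each statement's English description precedes it below -/
import Mathlib

section
/- Let n ≥ 1 and r ≥ 1 be integers and let (A,B) ∈ ℤ²_{≥0}. Let A^r_{(A,B)} be the ℂ-subspace of A^r consisting of those f ∈ A^r each of whose monomials x_1^{a_1}⋯x_n^{a_n}y_1^{b_1}⋯y_n^{b_n} satisfies a_1+⋯+a_n = A and b_1+⋯+b_n = B. Then dim_ℂ A^r_{(A,B)} equals the number of vectors (a_1,b_1,…,a_n,b_n) ∈ ℤ^{2n} that are r-lexicographically increasing in ℤ²_{≥0} and satisfy a_1+⋯+a_n = A and b_1+⋯+b_n = B. -/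
/-!
The dimension is computed by counting leading monomials. View `ℂ[x, y]` as `ℂ[y][x]` and order
exponents colexicographically (largest index first), the `x`-exponents before the `y`-exponents.
The leading exponent of `f ≠ 0` is then a pair `(a, b)`: `x^a` is the leading `x`-monomial, and
`y^b` the leading monomial of its coefficient `g(y)`. The dimension of a space of polynomials of
fixed weight is the number of leading exponents occurring in it
(`finrank_eq_ncard_of_triangular`), so it suffices to show that those of `A^r` are exactly the
`r`-lexicographically increasing vectors.

*Leading exponents are `r`-lexicographically increasing* (`natRLex_of_mem_Ar`). An alternating
polynomial lies in the ideal `(x_i - x_j, y_i - y_j)`, so `f ∈ A^r` lies in its `r`-th power.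
Substituting `x_i ↦ T x_j`, this forces `(y_i - y_j)^(r - (a_j - a_i))` to divide `g` for `i < j`
(`sub_pow_dvd_leadingCoeff`). For fixed `j` these factors are pairwise coprime and each has leading
monomial a power of `y_j`, whence the lower bound on `b_j`. The monotonicity of `a`, and the
condition on `b` where `a` is constant, follow from the `S_n`-symmetry of `f`.

*Every such vector occurs* (`exists_hasLead`). Given `(a, b)`, cut the integers into blocks of
length `r` in each of the `r` possible ways, and for each `k < r` take the alternant with
`x`-exponents `⌊(a_j + k) / r⌋` and `y`-exponents essentially the position of `j` inside its block.
By Hermite's identity and a similar count, the product of these `r` alternants has leading exponent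
`(a, b)`.
-/

open Finset

noncomputable section

/-- The polynomial ring `ℂ[x_1,y_1,…,x_n,y_n]`: `Sum.inl i ↦ x_i`, `Sum.inr i ↦ y_i`. -/
abbrev PolyRing (n : ℕ) := MvPolynomial (Fin n ⊕ Fin n) ℂ

/-- `f` is alternating for the `S_n`-action `σ·x_i = x_{σ(i)}`, `σ·y_i = y_{σ(i)}`. -/
def IsAlternating (n : ℕ) (f : PolyRing n) : Prop :=
  ∀ σ : Equiv.Perm (Fin n),
    MvPolynomial.rename (Equiv.sumCongr σ σ) f = ((Equiv.Perm.sign σ : ℤ) : ℂ) • f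

/-- `A^r`: the ℂ-linear span of products of `r` alternating polynomials. -/
def Ar (n r : ℕ) : Submodule ℂ (PolyRing n) :=
  Submodule.span ℂ
    {f | ∃ g : Fin r → PolyRing n, (∀ m, IsAlternating n (g m)) ∧ f = ∏ m, g m}

/-- The subspace of polynomials all of whose monomials have total `x`-degree `A`
and total `y`-degree `B`. -/
def WtSp (n : ℕ) (A B : ℕ) : Submodule ℂ (PolyRing n) where
  carrier := {f | ∀ d ∈ f.support,
    (∑ i : Fin n, d (Sum.inl i)) = A ∧ (∑ i : Fin n, d (Sum.inr i)) = B}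
  add_mem' := by
    intro f g hf hg d hd
    rcases Finset.mem_union.mp (MvPolynomial.support_add hd) with h | h
    · exact hf d h
    · exact hg d h
  zero_mem' := by
    intro d hd
    simp at hd
  smul_mem' := by
    intro c f hf d hd
    exact hf d (MvPolynomial.support_smul hd)

/-- An `r`-lexicographically increasing `n`-tuple of integer points in `ℤ²_{≥0}`. -/
def RLexNN (n : ℕ) (r : ℤ) (a b : Fin n → ℤ) : Prop :=
  (∀ h : 0 < n, 0 ≤ a ⟨0, h⟩) ∧ Monotone a ∧
  (∀ i : Fin n, ∀ h : (i : ℕ) + 1 < n,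
      a i = a ⟨(i : ℕ) + 1, h⟩ → b i + r ≤ b ⟨(i : ℕ) + 1, h⟩) ∧
  (∀ j : Fin n, (∑ i ∈ univ.filter (fun i => i < j), max (r - (a j - a i)) 0) ≤ b j)

/-! ### Colex order, the iterated polynomial ring and symmetry -/

/-- The colexicographic monomial order on `n` variables: exponents are compared at the largest
index where they differ. -/
def colexOrder (n : ℕ) : MonomialOrder (Fin n) where
  syn := Lex ((Fin n)ᵒᵈ →₀ ℕ)
  toSyn := (Finsupp.domCongr OrderDual.toDual).trans
    { toEquiv := toLex
      map_add' := toLex_add }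
  toSyn_monotone := by
    intro a b h
    refine Finsupp.toLex_monotone ?_
    intro i
    exact h (OrderDual.ofDual i)

theorem colexOrder_lt_iff {n : ℕ} {c d : Fin n →₀ ℕ} :
    (colexOrder n).toSyn c < (colexOrder n).toSyn d ↔
      ∃ i, (∀ j, i < j → c j = d j) ∧ c i < d i := by
  change toLex (Finsupp.domCongr OrderDual.toDual c) <
    toLex (Finsupp.domCongr OrderDual.toDual d) ↔ _
  rw [Finsupp.Lex.lt_iff]
  rfl

section Algebra
open MvPolynomial

/-- `ℂ[y][x]`: polynomials in the `x_i` whose coefficients are polynomials in the `y_i`. -/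
abbrev IterRing (n : ℕ) := MvPolynomial (Fin n) (MvPolynomial (Fin n) ℂ)

/-- The identification `ℂ[x, y] ≃ ℂ[y][x]`. -/
def toIter (n : ℕ) : PolyRing n ≃ₐ[ℂ] IterRing n := sumAlgEquiv ℂ (Fin n) (Fin n)

theorem toIter_monomial {n : ℕ} (a b : Fin n →₀ ℕ) (c : ℂ) :
    toIter n (monomial (Finsupp.sumElim a b) c) = monomial a (monomial b c) := by
  have h1 : (monomial (Finsupp.sumElim a b) c : PolyRing n) =
      rename Sum.inl (monomial a 1) * rename Sum.inr (monomial b c) := by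
    rw [rename_monomial, rename_monomial, monomial_mul, Finsupp.sumElim_eq_add, one_mul]
  have h2 (p : MvPolynomial (Fin n) ℂ) : toIter n (rename Sum.inl p) = map C p :=
    DFunLike.congr_fun (sumAlgEquiv_comp_rename_inl ℂ (Fin n) (Fin n)) p
  have h3 (p : MvPolynomial (Fin n) ℂ) : toIter n (rename Sum.inr p) = C p :=
    DFunLike.congr_fun (sumAlgEquiv_comp_rename_inr ℂ (Fin n) (Fin n)) p
  rw [h1, map_mul, h2, h3, map_monomial, mul_comm, C_mul_monomial]
  simp

theorem sumElim_comapDomain {n : ℕ} (d : Fin n ⊕ Fin n →₀ ℕ) :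
    Finsupp.sumElim (d.comapDomain Sum.inl Sum.inl_injective.injOn)
      (d.comapDomain Sum.inr Sum.inr_injective.injOn) = d := by
  ext (i | i) <;> rfl

theorem coeff_toIter {n : ℕ} (f : PolyRing n) (a b : Fin n →₀ ℕ) :
    coeff b (coeff a (toIter n f)) = coeff (Finsupp.sumElim a b) f := by
  induction f using MvPolynomial.induction_on' with
  | add p q hp hq => simp only [map_add, coeff_add, hp, hq]
  | monomial d c =>
    rw [← sumElim_comapDomain d, toIter_monomial]
    generalize d.comapDomain Sum.inl Sum.inl_injective.injOn = u
    generalize d.comapDomain Sum.inr Sum.inr_injective.injOn = v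
    have : Finsupp.sumElim u v = Finsupp.sumElim a b ↔ u = a ∧ v = b := by
      constructor
      · intro h
        exact ⟨Finsupp.ext fun i => DFunLike.congr_fun h (Sum.inl i),
          Finsupp.ext fun i => DFunLike.congr_fun h (Sum.inr i)⟩
      · rintro ⟨rfl, rfl⟩; rfl
    classical
    simp only [coeff_monomial, this]
    by_cases hu : u = a <;> simp [hu, coeff_monomial]

theorem toIter_rename {n : ℕ} (σ : Fin n → Fin n) (f : PolyRing n) :
    toIter n (rename (Sum.map σ σ) f) =
      rename σ (map (rename σ : MvPolynomial (Fin n) ℂ →ₐ[ℂ] _).toRingHom (toIter n f)) := by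
  induction f using MvPolynomial.induction_on with
  | C a => simp [toIter]
  | add p q hp hq => simp only [map_add, hp, hq]
  | mul_X p i hp =>
    simp only [map_mul, hp]
    rcases i with i | i <;> simp [toIter]

/-- `A^r` is contained in the `sgn^r`-isotypic part. -/
theorem rename_of_mem_Ar {n r : ℕ} {f : PolyRing n} (hf : f ∈ Ar n r) (σ : Equiv.Perm (Fin n)) :
    rename (Equiv.sumCongr σ σ) f = (((Equiv.Perm.sign σ : ℤ) : ℂ) ^ r) • f := by
  induction hf using Submodule.span_induction with
  | mem x h =>
    obtain ⟨g, hg, rfl⟩ := h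
    rw [map_prod, Finset.prod_congr rfl (fun m _ => hg m σ), Finset.prod_smul]
    simp
  | zero => simp
  | add x y _ _ hx hy => rw [map_add, hx, hy, smul_add]
  | smul a x _ hx => rw [map_smul, hx, smul_comm]

/-- Permuting the `y`-variables in the coefficient of `x^a` gives, up to sign, the coefficient
of the permuted monomial. -/
theorem coeff_mapDomain_of_mem_Ar {n r : ℕ} {f : PolyRing n} (hf : f ∈ Ar n r)
    (σ : Equiv.Perm (Fin n)) (a : Fin n →₀ ℕ) :
    rename σ (coeff a (toIter n f)) =
      (((Equiv.Perm.sign σ : ℤ) : ℂ) ^ r) • coeff (a.mapDomain σ) (toIter n f) := by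
  have h := congrArg (toIter n) (rename_of_mem_Ar hf σ)
  have h2 := toIter_rename σ f
  change toIter n (rename (Sum.map σ σ) f) = _ at h
  rw [h2, map_smul] at h
  have h3 := congrArg (coeff (a.mapDomain σ)) h
  rw [coeff_rename_mapDomain _ σ.injective, coeff_map, coeff_smul] at h3
  exact h3

theorem coeff_mapDomain_ne_zero {n r : ℕ} {f : PolyRing n} (hf : f ∈ Ar n r)
    (σ : Equiv.Perm (Fin n)) (a : Fin n →₀ ℕ) (h : coeff a (toIter n f) ≠ 0) :
    coeff (a.mapDomain σ) (toIter n f) ≠ 0 := by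
  intro h0
  have := coeff_mapDomain_of_mem_Ar hf σ a
  rw [h0, smul_zero] at this
  exact h ((map_eq_zero_iff _ (rename_injective _ σ.injective)).1 this)

theorem mapDomain_swap_apply {n : ℕ} (i j : Fin n) (a : Fin n →₀ ℕ) (l : Fin n) :
    a.mapDomain (Equiv.swap i j) l = a (Equiv.swap i j l) := by
  rw [Finsupp.mapDomain_equiv_apply, Equiv.symm_swap]

/-- If the support of a polynomial is stable under swapping two indices, then its
colex-leading exponent is ordered at these indices. -/
theorem degree_le_of_swap {n : ℕ} {R : Type*} [CommRing R] {F : MvPolynomial (Fin n) R}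
    {i j : Fin n} (hij : i < j)
    (hs : ∀ a, coeff a F ≠ 0 → coeff (a.mapDomain (Equiv.swap i j)) F ≠ 0) :
    (colexOrder n).degree F i ≤ (colexOrder n).degree F j := by
  by_cases h0 : F = 0
  · simp [h0]
  by_contra! hlt
  have h1 := hs _ (((colexOrder n).coeff_degree_ne_zero_iff).2 h0)
  refine h1 ((colexOrder n).coeff_eq_zero_of_lt (colexOrder_lt_iff.2 ⟨j, ?_, ?_⟩))
  · intro l hl
    rw [mapDomain_swap_apply, Equiv.swap_apply_of_ne_of_ne (hij.trans hl).ne' hl.ne']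
  · rw [mapDomain_swap_apply, Equiv.swap_apply_right]
    exact hlt

/-! ### Order of vanishing along the diagonals -/

/-- A product of `p + q` factors from `I` or `J` has at least `p + 1` factors in `I` or at least
`q` in `J`. The gain of `1` over the naive bound is what makes the degree count in
`sub_pow_dvd_leadingCoeff` sharp. -/
theorem sup_pow_add_le {R : Type*} [CommSemiring R] (I J : Ideal R) (p q : ℕ) :
    (I ⊔ J) ^ (p + q) ≤ I ^ (p + 1) ⊔ J ^ q := by
  induction p generalizing q with
  | zero =>
    induction q with
    | zero => simp
    | succ q ih =>
      simp only [zero_add, pow_one] at ih ⊢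
      rw [pow_succ (I ⊔ J), Ideal.mul_sup]
      refine sup_le (Ideal.mul_le_right.trans le_sup_left) ?_
      refine (Ideal.mul_mono_left ih).trans ?_
      rw [Ideal.sup_mul]
      exact sup_le (Ideal.mul_le_left.trans le_sup_left) (by rw [pow_succ]; exact le_sup_right)
  | succ p ihp =>
    induction q with
    | zero => simp
    | succ q ihq =>
      have e : p + 1 + (q + 1) = (p + 1 + q) + 1 := by ring
      rw [e, pow_succ, Ideal.mul_sup]
      refine sup_le ?_ ?_
      · have e2 : p + 1 + q = p + (q + 1) := by ring
        rw [e2]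
        refine (Ideal.mul_mono_left (ihp (q + 1))).trans ?_
        rw [Ideal.sup_mul]
        exact sup_le (by rw [pow_succ I (p + 1)]; exact le_sup_left)
          (Ideal.mul_le_left.trans le_sup_right)
      · refine (Ideal.mul_mono_left ihq).trans ?_
        rw [Ideal.sup_mul]
        exact sup_le (Ideal.mul_le_left.trans le_sup_left)
          (by rw [pow_succ]; exact le_sup_right)

/-- The ideal of the locus where the points `i` and `j` collide. -/
def diagIdeal {n : ℕ} (i j : Fin n) : Ideal (PolyRing n) :=
  Ideal.span {X (Sum.inl i) - X (Sum.inl j), X (Sum.inr i) - X (Sum.inr j)}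

/-- Identifying the points `i` and `j` is invariant under swapping them, hence kills every
alternating polynomial; and modulo `diagIdeal i j` this identification changes nothing. -/
theorem IsAlternating.mem_diagIdeal {n : ℕ} {h : PolyRing n} (hh : IsAlternating n h)
    {i j : Fin n} (hij : i ≠ j) : h ∈ diagIdeal i j := by
  let τ : Fin n → Fin n := Function.update id i j
  have hτ : τ ∘ Equiv.swap i j = τ := by
    funext l
    by_cases h1 : l = i
    · subst h1; simp [τ, Function.update_apply]
    by_cases h2 : l = j
    · subst h2; simp [τ, Function.update_apply]
    · simp [Equiv.swap_apply_of_ne_of_ne h1 h2]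
  have h0 : rename (Sum.map τ τ) h = 0 := by
    have h1 := congrArg (rename (Sum.map τ τ)) (hh (Equiv.swap i j))
    rw [rename_rename, map_smul, Equiv.Perm.sign_swap hij] at h1
    have h2 : Sum.map τ τ ∘ (Equiv.sumCongr (Equiv.swap i j) (Equiv.swap i j)) = Sum.map τ τ := by
      change Sum.map τ τ ∘ Sum.map _ _ = _
      rw [Sum.map_comp_map, hτ]
    rw [h2] at h1
    simpa [self_eq_neg] using h1
  have h1 : (Ideal.Quotient.mkₐ ℂ (diagIdeal i j)).comp (rename (Sum.map τ τ)) =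
      Ideal.Quotient.mkₐ ℂ (diagIdeal i j) := by
    ext l
    simp only [AlgHom.comp_apply, rename_X, Ideal.Quotient.mkₐ_eq_mk]
    rw [Ideal.Quotient.eq]
    rcases l with l | l
    · by_cases hl : l = i
      · subst hl
        rw [← neg_mem_iff]
        simp only [Sum.map_inl, τ, Function.update_self, neg_sub]
        exact Ideal.subset_span (by simp)
      · simp [τ, Function.update_of_ne hl]
    · by_cases hl : l = i
      · subst hl
        rw [← neg_mem_iff]
        simp only [Sum.map_inr, τ, Function.update_self, neg_sub]
        exact Ideal.subset_span (by simp)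
      · simp [τ, Function.update_of_ne hl]
  have h2 := DFunLike.congr_fun h1 h
  rw [AlgHom.comp_apply, h0, map_zero] at h2
  exact Ideal.Quotient.eq_zero_iff_mem.1 h2.symm

theorem mem_diagIdeal_pow {n r : ℕ} {f : PolyRing n} (hf : f ∈ Ar n r)
    {i j : Fin n} (hij : i ≠ j) : f ∈ diagIdeal i j ^ r := by
  induction hf using Submodule.span_induction with
  | mem x h =>
    obtain ⟨g, hg, rfl⟩ := h
    have := Ideal.prod_mem_prod (s := Finset.univ) (I := fun _ : Fin r => diagIdeal i j) (x := g)
      (fun m _ => (hg m).mem_diagIdeal hij)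
    simpa using this
  | zero => simp
  | add x y _ _ hx hy => exact add_mem hx hy
  | smul a x _ hx => exact Submodule.smul_of_tower_mem _ a hx

/-- The substitution `x_i ↦ T x_j`, the other variables being fixed. -/
def substT {R : Type*} [CommRing R] {n : ℕ} (i j : Fin n) :
    MvPolynomial (Fin n) R →+* MvPolynomial (Fin n) (Polynomial R) :=
  eval₂Hom (C.comp Polynomial.C) (Function.update X i (C Polynomial.X * X j))

/-- The map sending `i` to `j` and fixing the other indices; pushing an exponent vector forward
along it moves the exponent of `x_i` onto `x_j`. -/
abbrev mergeIdx {n : ℕ} (i j : Fin n) : Fin n → Fin n := Function.update id i j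

theorem substT_monomial {R : Type*} [CommRing R] {n : ℕ} (i j : Fin n) (c : Fin n →₀ ℕ) (u : R) :
    substT i j (monomial c u) =
      monomial (c.mapDomain (mergeIdx i j)) (Polynomial.C u * Polynomial.X ^ c i) := by
  have key : substT i j (monomial c (1 : R)) =
      monomial (c.mapDomain (mergeIdx i j)) (Polynomial.X ^ c i) := by
    induction c using Finsupp.induction_linear with
    | zero => simp
    | add f g hf hg =>
      have : (monomial (f + g) (1 : R)) = monomial f 1 * monomial g 1 := by
        rw [monomial_mul, one_mul]
      rw [this, map_mul, hf, hg, monomial_mul, Finsupp.mapDomain_add, Finsupp.add_apply, pow_add]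
    | single l e =>
      rw [← X_pow_eq_monomial, map_pow, Finsupp.mapDomain_single]
      by_cases hl : l = i
      · subst hl
        rw [substT, eval₂Hom_X', Function.update_self, mergeIdx, Function.update_self,
          mul_pow, ← C_pow,
          X_pow_eq_monomial, C_mul_monomial, mul_one, Finsupp.single_eq_same]
      · simp [substT, hl, X_pow_eq_monomial]
  have : (monomial c u : MvPolynomial (Fin n) R) = C u * monomial c 1 := by
    rw [C_mul_monomial, mul_one]
  rw [this, map_mul, key]
  simp [substT, C_mul_monomial]

theorem mapDomain_mergeIdx {n : ℕ} (i j : Fin n) (c : Fin n →₀ ℕ) :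
    c.mapDomain (mergeIdx i j) = c.erase i + Finsupp.single j (c i) := by
  conv_lhs => rw [← Finsupp.erase_add_single i c]
  rw [Finsupp.mapDomain_add, Finsupp.mapDomain_single, mergeIdx, Function.update_self]
  congr 1
  refine (Finsupp.mapDomain_congr fun l hl => ?_).trans Finsupp.mapDomain_id
  have : l ≠ i := by
    rintro rfl
    simp at hl
  simp [this]

theorem mapDomain_mergeIdx_eq_iff {n : ℕ} {i j : Fin n} (hij : i ≠ j) (c d : Fin n →₀ ℕ) :
    c.mapDomain (mergeIdx i j) = d.mapDomain (mergeIdx i j) ↔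
      (∀ l, l ≠ i → l ≠ j → c l = d l) ∧ c i + c j = d i + d j := by
  rw [mapDomain_mergeIdx, mapDomain_mergeIdx]
  constructor
  · intro h
    refine ⟨fun l h1 h2 => ?_, ?_⟩
    · simpa [h1, h2] using DFunLike.congr_fun h l
    · have := DFunLike.congr_fun h j
      simp [hij.symm] at this
      omega
  · rintro ⟨h1, h2⟩
    ext l
    by_cases hi : l = i
    · subst hi
      simp [hij.symm]
    by_cases hj : l = j
    · subst hj
      simp [hi]
      omega
    · simp [hi, Ne.symm hj, h1 l hi hj]

/-- The substitution `x_i ↦ T x_j` loses no information: the power of `T` records the exponent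
of `x_i`. -/
theorem coeff_coeff_substT {R : Type*} [CommRing R] {n : ℕ} {i j : Fin n} (hij : i ≠ j)
    (F : MvPolynomial (Fin n) R) (c : Fin n →₀ ℕ) :
    (coeff (c.mapDomain (mergeIdx i j)) (substT i j F)).coeff (c i) = coeff c F := by
  have inj : ∀ d : Fin n →₀ ℕ, d.mapDomain (mergeIdx i j) = c.mapDomain (mergeIdx i j) →
      d i = c i → d = c := by
    intro d h1 h2
    obtain ⟨h3, h4⟩ := (mapDomain_mergeIdx_eq_iff hij d c).1 h1
    ext l
    by_cases hi : l = i
    · rw [hi, h2]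
    by_cases hj : l = j
    · rw [hj]; omega
    · exact h3 l hi hj
  induction F using MvPolynomial.induction_on' with
  | add p q hp hq => simp only [map_add, coeff_add, hp, hq, Polynomial.coeff_add]
  | monomial d u =>
    classical
    rw [substT_monomial, coeff_monomial, coeff_monomial]
    by_cases h1 : d = c
    · simp [h1]
    · rw [if_neg h1]
      split_ifs with h2
      · have : c i ≠ d i := fun h3 => h1 (inj d h2 h3.symm)
        simp [this]
      · simp

theorem exists_coeff_ne_zero_of_substT {R : Type*} [CommRing R] {n : ℕ} {i j : Fin n}
    {F : MvPolynomial (Fin n) R} {e : Fin n →₀ ℕ} {k : ℕ}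
    (h : (coeff e (substT i j F)).coeff k ≠ 0) :
    ∃ c : Fin n →₀ ℕ, c.mapDomain (mergeIdx i j) = e ∧ c i = k ∧ coeff c F ≠ 0 := by
  classical
  by_contra! hc
  apply h
  rw [F.as_sum, map_sum, coeff_sum, Polynomial.finsetSum_coeff]
  refine Finset.sum_eq_zero fun c hcF => ?_
  rw [substT_monomial, coeff_monomial]
  split_ifs with h1
  · have : k ≠ c i := fun h2 => mem_support_iff.1 hcF (hc c h1 h2.symm)
    simp [this]
  · simp

/-- Over `R ⧸ (w ^ m)`, a multiple of `(T - 1) ^ (d + 1)` whose terms all have exponents in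
`[p, p + d]` vanishes. -/
theorem dvd_coeff_of_mem {R : Type*} [CommRing R] (w : R) (m d p : ℕ) (P : Polynomial R)
    (hP : P ∈ Ideal.span {(Polynomial.X - 1) ^ (d + 1)} ⊔ Ideal.span {Polynomial.C w ^ m})
    (hlo : ∀ k < p, P.coeff k = 0) (hhi : ∀ k, p + d < k → P.coeff k = 0) (k : ℕ) :
    w ^ m ∣ P.coeff k := by
  let π := Ideal.Quotient.mk (Ideal.span {w ^ m})
  have hmon : ((Polynomial.X - 1 : Polynomial (R ⧸ Ideal.span {w ^ m})) ^ (d + 1)).Monic :=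
    (Polynomial.monic_X_sub_C 1).pow _
  suffices h : P.map π = 0 by
    have := congrArg (fun Q => Polynomial.coeff Q k) h
    simp only [Polynomial.coeff_map, Polynomial.coeff_zero] at this
    exact Ideal.mem_span_singleton.1 (Ideal.Quotient.eq_zero_iff_mem.1 this)
  have hdvd : (Polynomial.X - 1) ^ (d + 1) ∣ P.map π := by
    obtain ⟨u, hu, v, hv, rfl⟩ := Submodule.mem_sup.1 hP
    obtain ⟨u, rfl⟩ := Ideal.mem_span_singleton.1 hu
    obtain ⟨v, rfl⟩ := Ideal.mem_span_singleton.1 hv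
    have hw : (π w) ^ m = 0 := by
      rw [← map_pow]
      exact Ideal.Quotient.eq_zero_iff_mem.2 (Ideal.mem_span_singleton_self _)
    refine ⟨u.map π, ?_⟩
    rw [Polynomial.map_add, Polynomial.map_mul, Polynomial.map_mul, Polynomial.map_pow,
      Polynomial.map_pow, Polynomial.map_C, ← Polynomial.C_pow, hw]
    simp
  obtain ⟨Q, hQ⟩ : Polynomial.X ^ p ∣ P := Polynomial.X_pow_dvd_iff.2 hlo
  subst hQ
  rw [Polynomial.map_mul, Polynomial.map_pow, Polynomial.map_X] at hdvd ⊢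
  have hcop : IsCoprime ((Polynomial.X - 1 : Polynomial (R ⧸ Ideal.span {w ^ m})) ^ (d + 1))
      (Polynomial.X ^ p) := by
    refine IsCoprime.pow ⟨-1, 1, by ring⟩
  have hdvd2 := hcop.dvd_of_dvd_mul_left hdvd
  nontriviality (R ⧸ Ideal.span {w ^ m})
  have hdeg : Q.natDegree ≤ d := by
    refine Polynomial.natDegree_le_iff_coeff_eq_zero.2 fun k hk => ?_
    have := hhi (k + p) (by omega)
    rwa [Polynomial.coeff_X_pow_mul] at this
  have hz : Q.map π = 0 := by
    by_contra hne
    refine hmon.not_dvd_of_natDegree_lt hne ?_ hdvd2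
    have e : ((Polynomial.X - 1 : Polynomial (R ⧸ Ideal.span {w ^ m})) ^ (d + 1)).natDegree
        = d + 1 := by
      rw [← Polynomial.C_1, (Polynomial.monic_X_sub_C _).natDegree_pow,
        Polynomial.natDegree_X_sub_C, mul_one]
    rw [e]
    exact lt_of_le_of_lt (Polynomial.natDegree_map_le.trans hdeg) (Nat.lt_succ_self d)
  rw [hz, mul_zero]

/-- Let `x^a` be the leading `x`-monomial of `f ∈ A^r`, with coefficient `g(y)`, and let
`d = a_j - a_i`. After substituting `x_i ↦ T x_j`, the coefficient of the merged monomial is a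
polynomial in `T` with exponents in `[a_i, a_j]`, and it lies in the ideal generated by
`(T - 1)^(d+1)` and `(y_i - y_j)^(r-d)`. Hence `(y_i - y_j)^(r-d)` divides all its coefficients,
one of which is `g`. -/
theorem sub_pow_dvd_leadingCoeff {n r : ℕ} {f : PolyRing n} (hf : f ∈ Ar n r)
    {i j : Fin n} (hij : i < j) :
    (X i - X j) ^ (r - ((colexOrder n).degree (toIter n f) j -
      (colexOrder n).degree (toIter n f) i)) ∣ (colexOrder n).leadingCoeff (toIter n f) := by
  set F := toIter n f with hF
  set a := (colexOrder n).degree F with ha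
  have hle : a i ≤ a j := degree_le_of_swap hij (fun c hc => coeff_mapDomain_ne_zero hf _ c hc)
  set d := a j - a i with hd
  rcases le_or_gt r d with hrd | hrd
  · rw [Nat.sub_eq_zero_of_le hrd, pow_zero]
    exact one_dvd _
  set m := r - d with hm
  let w : MvPolynomial (Fin n) ℂ := X i - X j
  let I : Ideal (MvPolynomial (Fin n) (Polynomial (MvPolynomial (Fin n) ℂ))) :=
    Ideal.span {C (Polynomial.X - 1)}
  let J : Ideal (MvPolynomial (Fin n) (Polynomial (MvPolynomial (Fin n) ℂ))) :=
    Ideal.span {C (Polynomial.C w)}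
  -- A term `x^c` contributing to the merged coefficient must have `a i ≤ c i ≤ a j`.
  have hvan (k : ℕ) (hk : k < a i ∨ a i + d < k) :
      (coeff (a.mapDomain (mergeIdx i j)) (substT i j F)).coeff k = 0 := by
    by_contra hne0
    obtain ⟨c, hm, hci, hne⟩ := exists_coeff_ne_zero_of_substT hne0
    obtain ⟨hcl, hsum⟩ := (mapDomain_mergeIdx_eq_iff hij.ne c a).1 hm
    rcases hk with hk | hk
    · refine hne ((colexOrder n).coeff_eq_zero_of_lt (colexOrder_lt_iff.2 ⟨j, ?_, ?_⟩))
      · intro l hl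
        exact (hcl l (hij.trans hl).ne' hl.ne').symm
      · change a j < c j
        omega
    · refine coeff_mapDomain_ne_zero hf (Equiv.swap i j) c hne
        ((colexOrder n).coeff_eq_zero_of_lt (colexOrder_lt_iff.2 ⟨j, ?_, ?_⟩))
      · intro l hl
        rw [mapDomain_swap_apply, Equiv.swap_apply_of_ne_of_ne (hij.trans hl).ne' hl.ne']
        exact (hcl l (hij.trans hl).ne' hl.ne').symm
      · rw [mapDomain_swap_apply, Equiv.swap_apply_right]
        change a j < c i
        omega
  have h1 : substT i j F ∈ I ^ (d + 1) ⊔ J ^ m := by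
    have hr : d + m = r := by omega
    suffices h : substT i j F ∈ (I ⊔ J) ^ (d + m) from sup_pow_add_le I J d m h
    rw [hr]
    have h2 := Ideal.mem_map_of_mem ((substT i j).comp (toIter n).toRingEquiv.toRingHom)
      (mem_diagIdeal_pow hf hij.ne)
    rw [Ideal.map_pow] at h2
    refine Ideal.pow_right_mono ?_ r h2
    rw [diagIdeal, Ideal.map_span, Ideal.span_le]
    rintro _ ⟨z, hz, rfl⟩
    rcases hz with rfl | rfl
    · refine Ideal.mem_sup_left (Ideal.mem_span_singleton.2 ⟨X j, ?_⟩)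
      simp [toIter, substT, hij.ne']
      ring
    · refine Ideal.mem_sup_right (Ideal.mem_span_singleton.2 ⟨1, ?_⟩)
      simp [toIter, substT, w]
  rw [Ideal.span_singleton_pow, Ideal.span_singleton_pow, Submodule.mem_sup] at h1
  obtain ⟨u, hu, v, hv, huv⟩ := h1
  obtain ⟨u, rfl⟩ := Ideal.mem_span_singleton.1 hu
  obtain ⟨v, rfl⟩ := Ideal.mem_span_singleton.1 hv
  have key := dvd_coeff_of_mem w m d (a i) (coeff (a.mapDomain (mergeIdx i j)) (substT i j F))
    ?_ ?_ ?_ (a i)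
  · rw [coeff_coeff_substT hij.ne] at key
    exact key
  · rw [← huv, ← C_pow, ← C_pow, coeff_add, coeff_C_mul, coeff_C_mul]
    exact add_mem (Ideal.mem_sup_left (Ideal.mul_mem_right _ _ (Ideal.mem_span_singleton_self _)))
      (Ideal.mem_sup_right (Ideal.mul_mem_right _ _ (Ideal.mem_span_singleton_self _)))
  · exact fun k hk => hvan k (Or.inl hk)
  · exact fun k hk => hvan k (Or.inr hk)

/-! ### Leading exponents are `r`-lexicographically increasing -/

/-- The `r`-lexicographically increasing condition for exponent vectors. Truncated subtraction
encodes `max (r - (a_j - a_i)) 0`; it is only meaningful because `a` is monotone. -/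
def NatRLex {n : ℕ} (r : ℕ) (a b : Fin n →₀ ℕ) : Prop :=
  Monotone a ∧ (∀ i j : Fin n, (i : ℕ) + 1 = j → a i = a j → b i + r ≤ b j) ∧
    ∀ j : Fin n, ∑ i ∈ univ.filter (fun i => i < j), (r - (a j - a i)) ≤ b j

theorem degree_X_sub_X {n : ℕ} {i j : Fin n} (hij : i < j) :
    (colexOrder n).degree (X i - X j : MvPolynomial (Fin n) ℂ) = Finsupp.single j 1 := by
  rw [← neg_sub, MonomialOrder.degree_neg, MonomialOrder.degree_sub_of_lt,
    MonomialOrder.degree_X]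
  rw [MonomialOrder.degree_X, MonomialOrder.degree_X, colexOrder_lt_iff]
  refine ⟨j, fun l hl => ?_, ?_⟩
  · simp [hl.ne, (hij.trans hl).ne]
  · simp [hij.ne]

theorem X_sub_X_ne_zero {n : ℕ} {i j : Fin n} (hij : i ≠ j) :
    (X i - X j : MvPolynomial (Fin n) ℂ) ≠ 0 := by
  intro h
  exact hij (X_injective (sub_eq_zero.1 h))

theorem prime_X_sub_X {n : ℕ} {i j : Fin n} (hij : i ≠ j) :
    Prime (X i - X j : MvPolynomial (Fin n) ℂ) := by
  let φ : MvPolynomial (Fin n) ℂ ≃ₐ[ℂ] MvPolynomial (Fin n) ℂ :=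
    AlgEquiv.ofAlgHom (aeval (Function.update X i (X i - X j)))
      (aeval (Function.update X i (X i + X j)))
      (by
        ext l : 1
        by_cases hl : l = i
        · subst hl; simp [hij.symm]
        · simp [hl])
      (by
        ext l : 1
        by_cases hl : l = i
        · subst hl; simp [hij.symm]
        · simp [hl])
  have h : φ (X i) = X i - X j := by simp [φ]
  rw [← h, MulEquiv.prime_iff]
  exact X_prime

theorem isRelPrime_X_sub_X {n : ℕ} {i k j : Fin n} (hij : i ≠ j) (hkj : k ≠ j) (hik : i ≠ k) :
    IsRelPrime (X i - X j : MvPolynomial (Fin n) ℂ) (X k - X j) := by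
  rw [(prime_X_sub_X hij).irreducible.isRelPrime_iff_not_dvd]
  rintro ⟨q, hq⟩
  have := congrArg (eval (Pi.single k (1 : ℂ))) hq
  simp [hik, hkj.symm] at this

/-- Monotonicity comes from the symmetry of the support. The bound on `b_j` comes from the pairwise
coprime divisors `(y_i - y_j)^(r - (a_j - a_i))`, `i < j`, of the leading coefficient `g`. If
`a_i = a_j`, then `g = (y_i - y_j)^r h` with `h` symmetric in `y_i, y_j`, so `h` has leading
exponent ordered at `i, j`, and the first factor adds `r` at `j`. -/
theorem natRLex_of_mem_Ar {n r : ℕ} {f : PolyRing n} (hf : f ∈ Ar n r) (h0 : f ≠ 0) :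
    NatRLex r ((colexOrder n).degree (toIter n f))
      ((colexOrder n).degree ((colexOrder n).leadingCoeff (toIter n f))) := by
  have hF : toIter n f ≠ 0 := by simpa using h0
  have hg : (colexOrder n).leadingCoeff (toIter n f) ≠ 0 :=
    (colexOrder n).leadingCoeff_ne_zero_iff.2 hF
  have hdiv := fun i j (hij : i < j) => sub_pow_dvd_leadingCoeff hf hij
  have hmono : Monotone ((colexOrder n).degree (toIter n f)) := by
    intro i j hij
    rcases hij.eq_or_lt with rfl | hij
    · rfl
    · exact degree_le_of_swap hij (fun c hc => coeff_mapDomain_ne_zero hf _ c hc)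
  have hsymm := fun σ => coeff_mapDomain_of_mem_Ar hf σ ((colexOrder n).degree (toIter n f))
  change ∀ σ : Equiv.Perm (Fin n), rename σ ((colexOrder n).leadingCoeff (toIter n f)) = _ at hsymm
  set a := (colexOrder n).degree (toIter n f) with ha
  set g := (colexOrder n).leadingCoeff (toIter n f) with hg'
  refine ⟨hmono, ?_, ?_⟩
  · intro i j hij haij
    have hlt : i < j := by rw [Fin.lt_def]; omega
    obtain ⟨h, hh⟩ := hdiv i j hlt
    rw [← haij, Nat.sub_self, Nat.sub_zero] at hh
    have hsw := hsymm (Equiv.swap i j)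
    have hfix : a.mapDomain (Equiv.swap i j) = a := by
      ext l
      rw [mapDomain_swap_apply]
      rcases eq_or_ne l i with rfl | h1
      · rw [Equiv.swap_apply_left, haij]
      rcases eq_or_ne l j with rfl | h2
      · rw [Equiv.swap_apply_right, haij]
      · rw [Equiv.swap_apply_of_ne_of_ne h1 h2]
    rw [hfix] at hsw
    change _ = _ • g at hsw
    rw [hh, Equiv.Perm.sign_swap hlt.ne, map_mul, map_pow, map_sub, rename_X, rename_X,
      Equiv.swap_apply_left, Equiv.swap_apply_right, ← neg_sub (X i) (X j), neg_pow] at hsw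
    have hsw2 : rename (Equiv.swap i j) h = h := by
      have hne : (-1 : MvPolynomial (Fin n) ℂ) ^ r * (X i - X j) ^ r ≠ 0 :=
        mul_ne_zero (pow_ne_zero _ (by simp)) (pow_ne_zero _ (X_sub_X_ne_zero hlt.ne))
      refine mul_left_cancel₀ hne (hsw.trans ?_)
      simp [smul_eq_C_mul, mul_assoc]
    have hle : (colexOrder n).degree h i ≤ (colexOrder n).degree h j := by
      refine degree_le_of_swap hlt fun c hc => ?_
      rw [← hsw2, coeff_rename_mapDomain _ (Equiv.injective _)]
      exact hc
    have hh0 : h ≠ 0 := by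
      rintro rfl
      exact hg (by rw [hh, mul_zero])
    rw [hh, MonomialOrder.degree_mul (pow_ne_zero _ (X_sub_X_ne_zero hlt.ne)) hh0,
      MonomialOrder.degree_pow, degree_X_sub_X hlt]
    simp [hlt.ne]
    omega
  · intro j
    have hprod : ∏ i ∈ univ.filter (fun i => i < j),
        (X i - X j : MvPolynomial (Fin n) ℂ) ^ (r - (a j - a i)) ∣ g := by
      refine Finset.prod_dvd_of_isRelPrime ?_ ?_
      · intro i hi k hk hik
        simp only [coe_filter, mem_univ, true_and, Set.mem_ofPred_eq] at hi hk
        exact (isRelPrime_X_sub_X hi.ne hk.ne hik).pow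
      · intro i hi
        exact hdiv i j (by simpa using hi)
    obtain ⟨h, hh⟩ := hprod
    have hh0 : h ≠ 0 := by
      rintro rfl
      exact hg (by rw [hh, mul_zero])
    have hne : ∀ i ∈ univ.filter (fun i => i < j),
        (X i - X j : MvPolynomial (Fin n) ℂ) ^ (r - (a j - a i)) ≠ 0 := by
      intro i hi
      exact pow_ne_zero _ (X_sub_X_ne_zero (by simpa using hi : i < j).ne)
    rw [hh, MonomialOrder.degree_mul (Finset.prod_ne_zero_iff.2 hne) hh0,
      MonomialOrder.degree_prod hne, Finsupp.add_apply, Finsupp.finsetSum_apply]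
    refine le_add_right (Finset.sum_le_sum fun i hi => ?_)
    rw [MonomialOrder.degree_pow, degree_X_sub_X (by simpa using hi : i < j)]
    simp

/-! ### Alternants and their leading exponents -/

/-- The alternant `∑ σ, sgn σ · ∏ l, x_{σ l}^{α l} y_{σ l}^{β l}`. -/
def alternant {n : ℕ} (α β : Fin n →₀ ℕ) : PolyRing n :=
  ∑ σ : Equiv.Perm (Fin n), ((Equiv.Perm.sign σ : ℤ) : ℂ) •
    monomial (Finsupp.sumElim (α.mapDomain σ) (β.mapDomain σ)) 1

theorem mapDomain_sumElim {n : ℕ} (ρ : Equiv.Perm (Fin n)) (u v : Fin n →₀ ℕ) :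
    (Finsupp.sumElim u v).mapDomain (Equiv.sumCongr ρ ρ) =
      Finsupp.sumElim (u.mapDomain ρ) (v.mapDomain ρ) := by
  ext (l | l) <;> simp [Finsupp.mapDomain_equiv_apply]

theorem isAlternating_alternant {n : ℕ} (α β : Fin n →₀ ℕ) :
    IsAlternating n (alternant α β) := by
  intro ρ
  rw [alternant, map_sum, Finset.smul_sum]
  refine Fintype.sum_equiv (Equiv.mulLeft ρ) _ _ fun σ => ?_
  rw [map_smul, rename_monomial, mapDomain_sumElim, smul_smul, ← Finsupp.mapDomain_comp,
    ← Finsupp.mapDomain_comp, Equiv.coe_mulLeft, Equiv.Perm.sign_mul, Equiv.Perm.coe_mul]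
  congr 1
  have : ((Equiv.Perm.sign ρ : ℤ) : ℂ) * ((Equiv.Perm.sign ρ : ℤ) : ℂ) = 1 := by
    rw [← Int.cast_mul, ← Units.val_mul, Int.units_mul_self]
    simp
  rw [Units.val_mul, Int.cast_mul, ← mul_assoc, this, one_mul]

theorem coeff_toIter_alternant {n : ℕ} (α β a b : Fin n →₀ ℕ) :
    coeff b (coeff a (toIter n (alternant α β))) =
      ∑ σ : Equiv.Perm (Fin n), if α.mapDomain σ = a ∧ β.mapDomain σ = b then
        ((Equiv.Perm.sign σ : ℤ) : ℂ) else 0 := by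
  classical
  rw [alternant, map_sum, coeff_sum, coeff_sum]
  refine Finset.sum_congr rfl fun σ _ => ?_
  rw [map_smul, toIter_monomial, coeff_smul, coeff_smul, coeff_monomial]
  by_cases h1 : α.mapDomain σ = a <;> by_cases h2 : β.mapDomain σ = b <;>
    simp [h1, h2, coeff_monomial]

theorem exists_of_coeff_alternant_ne_zero {n : ℕ} {α β a b : Fin n →₀ ℕ}
    (h : coeff b (coeff a (toIter n (alternant α β))) ≠ 0) :
    ∃ σ : Equiv.Perm (Fin n), α.mapDomain σ = a ∧ β.mapDomain σ = b := by
  rw [coeff_toIter_alternant] at h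
  obtain ⟨σ, _, hσ⟩ := Finset.exists_ne_zero_of_sum_ne_zero h
  exact ⟨σ, by by_contra hn; simp [hn] at hσ⟩

/-- The counting behind both rearrangement inequalities: a permutation cannot pull back a set
`S` of indices beyond `i` to a set containing `S` and `i`. -/
theorem false_of_perm {n : ℕ} (π : Equiv.Perm (Fin n)) (P : Fin n → Prop) (i : Fin n)
    (h1 : ∀ l, P l → i < l) (h2 : ∀ l, P l → P (π l)) (h3 : P (π i)) : False := by
  classical
  have hc : (univ.filter (fun l => P (π l))).card = (univ.filter P).card := by
    refine Finset.card_bij (fun l _ => π l) ?_ ?_ ?_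
    · intro l hl; simpa using hl
    · intro l _ l' _ h; exact π.injective h
    · intro l hl; exact ⟨π.symm l, by simpa using hl, by simp⟩
  have hlt : (univ.filter P).card < (univ.filter (fun l => P (π l))).card := by
    refine Finset.card_lt_card ⟨fun l hl => ?_, fun h => ?_⟩
    · simp only [mem_filter, mem_univ, true_and] at hl ⊢
      exact h2 l hl
    · have := h (by simpa using h3 : i ∈ univ.filter (fun l => P (π l)))
      exact lt_irrefl i (h1 i (by simpa using this))
  omega

/-- A monotone vector is colex-maximal among its rearrangements. -/
theorem not_lt_mapDomain {n : ℕ} {α : Fin n →₀ ℕ} (hα : Monotone α) (σ : Equiv.Perm (Fin n)) :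
    ¬ (colexOrder n).toSyn α < (colexOrder n).toSyn (α.mapDomain σ) := by
  rw [colexOrder_lt_iff]
  rintro ⟨i, h1, h2⟩
  rw [Finsupp.mapDomain_equiv_apply] at h2
  have hlt : ∀ l, α (σ.symm i) ≤ α l → i < l := by
    intro l hl
    by_contra! hle
    exact absurd (hα hle) (by omega)
  refine false_of_perm σ.symm (fun l => α (σ.symm i) ≤ α l) i hlt (fun l hl => ?_) le_rfl
  have := h1 l (hlt l hl)
  rw [Finsupp.mapDomain_equiv_apply] at this
  omega

/-- Among the rearrangements by permutations fixing `α`, a vector `β` increasing on each level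
set of `α` is colex-maximal. -/
theorem not_lt_mapDomain_of_fix {n : ℕ} {α β : Fin n →₀ ℕ}
    (hβ : ∀ i j, i < j → α i = α j → β i < β j) (σ : Equiv.Perm (Fin n))
    (hσ : α.mapDomain σ = α) :
    ¬ (colexOrder n).toSyn β < (colexOrder n).toSyn (β.mapDomain σ) := by
  rw [colexOrder_lt_iff]
  rintro ⟨i, h1, h2⟩
  rw [Finsupp.mapDomain_equiv_apply] at h2
  have hfix (l) : α (σ.symm l) = α l := by
    conv_rhs => rw [← hσ, Finsupp.mapDomain_equiv_apply]
  have hlt : ∀ l, α l = α i ∧ β (σ.symm i) ≤ β l → i < l := by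
    rintro l ⟨hl1, hl2⟩
    by_contra! hle
    rcases hle.eq_or_lt with rfl | hle
    · omega
    · have := hβ l i hle hl1
      omega
  refine false_of_perm σ.symm (fun l => α l = α i ∧ β (σ.symm i) ≤ β l) i hlt
    (fun l hl => ?_) ⟨hfix i, le_rfl⟩
  have := h1 l (hlt l hl)
  rw [Finsupp.mapDomain_equiv_apply] at this
  exact ⟨(hfix l).trans hl.1, by omega⟩

theorem degree_eq_of_forall {n : ℕ} {R : Type*} [CommRing R] {F : MvPolynomial (Fin n) R}
    {a : Fin n →₀ ℕ} (h1 : coeff a F ≠ 0)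
    (h2 : ∀ c, (colexOrder n).toSyn a < (colexOrder n).toSyn c → coeff c F = 0) :
    (colexOrder n).degree F = a := by
  refine (colexOrder n).toSyn.injective (le_antisymm ?_ ?_)
  · rw [MonomialOrder.degree_le_iff]
    intro c hc
    by_contra! hlt
    exact mem_support_iff.1 hc (h2 c hlt)
  · exact (colexOrder n).le_degree (mem_support_iff.2 h1)

/-- `f` has leading exponent `(a, b)`: `a` is leading in the `x`-variables and `b` is leading in
the coefficient of `x^a`. -/
def HasLead {n : ℕ} (f : PolyRing n) (a b : Fin n →₀ ℕ) : Prop :=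
  f ≠ 0 ∧ (colexOrder n).degree (toIter n f) = a ∧
    (colexOrder n).degree ((colexOrder n).leadingCoeff (toIter n f)) = b

theorem hasLead_alternant {n : ℕ} {α β : Fin n →₀ ℕ} (hα : Monotone α)
    (hβ : ∀ i j, i < j → α i = α j → β i < β j) : HasLead (alternant α β) α β := by
  have hone : ∀ σ : Equiv.Perm (Fin n), α.mapDomain σ = α ∧ β.mapDomain σ = β ↔ σ = 1 := by
    intro σ
    constructor
    · rintro ⟨h1, h2⟩
      ext l : 1
      have e1 : α (σ l) = α l := by
        conv_lhs => rw [← h1, Finsupp.mapDomain_equiv_apply, Equiv.symm_apply_apply]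
      have e2 : β (σ l) = β l := by
        conv_lhs => rw [← h2, Finsupp.mapDomain_equiv_apply, Equiv.symm_apply_apply]
      rcases lt_trichotomy (σ l) l with h | h | h
      · exact absurd (hβ _ _ h e1) (by omega)
      · exact h
      · exact absurd (hβ _ _ h e1.symm) (by omega)
    · rintro rfl
      simp
  have hc : coeff β (coeff α (toIter n (alternant α β))) = 1 := by
    rw [coeff_toIter_alternant]
    simp [hone]
  have hd : (colexOrder n).degree (toIter n (alternant α β)) = α := by
    refine degree_eq_of_forall (fun h => by simp [h] at hc) fun c hlt => ?_
    ext b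
    by_contra hne
    obtain ⟨σ, rfl, _⟩ := exists_of_coeff_alternant_ne_zero hne
    exact not_lt_mapDomain hα σ hlt
  refine ⟨fun h => by simp [h] at hc, hd, ?_⟩
  rw [MonomialOrder.leadingCoeff, hd]
  refine degree_eq_of_forall (fun h => by simp [h] at hc) fun c hlt => ?_
  by_contra hne
  obtain ⟨σ, h1, rfl⟩ := exists_of_coeff_alternant_ne_zero hne
  exact not_lt_mapDomain_of_fix hβ σ h1 hlt

theorem HasLead.mul {n : ℕ} {f g : PolyRing n} {a b c d : Fin n →₀ ℕ}
    (hf : HasLead f a b) (hg : HasLead g c d) : HasLead (f * g) (a + c) (b + d) := by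
  obtain ⟨hf0, rfl, rfl⟩ := hf
  obtain ⟨hg0, rfl, rfl⟩ := hg
  have hf1 : toIter n f ≠ 0 := by simpa using hf0
  have hg1 : toIter n g ≠ 0 := by simpa using hg0
  refine ⟨mul_ne_zero hf0 hg0, ?_, ?_⟩
  · rw [map_mul, MonomialOrder.degree_mul hf1 hg1]
  · rw [map_mul, MonomialOrder.leadingCoeff_mul, MonomialOrder.degree_mul
      ((colexOrder n).leadingCoeff_ne_zero_iff.2 hf1)
      ((colexOrder n).leadingCoeff_ne_zero_iff.2 hg1)]

theorem HasLead.prod {n : ℕ} {ι : Type*} (s : Finset ι) {f : ι → PolyRing n}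
    {a b : ι → Fin n →₀ ℕ} (h : ∀ k ∈ s, HasLead (f k) (a k) (b k)) :
    HasLead (∏ k ∈ s, f k) (∑ k ∈ s, a k) (∑ k ∈ s, b k) := by
  classical
  induction s using Finset.induction_on with
  | empty => simp [HasLead]
  | insert k s hk ih =>
    rw [Finset.prod_insert hk, Finset.sum_insert hk, Finset.sum_insert hk]
    exact (h k (by simp)).mul (ih fun l hl => h l (by simp [hl]))

theorem mul_mem_WtSp {n A B A' B' : ℕ} {f g : PolyRing n} (hf : f ∈ WtSp n A B)
    (hg : g ∈ WtSp n A' B') : f * g ∈ WtSp n (A + A') (B + B') := by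
  classical
  intro d hd
  obtain ⟨u, hu, v, hv, rfl⟩ := Finset.mem_add.1 (support_mul f g hd)
  have h1 := hf u hu
  have h2 := hg v hv
  simp only [Finsupp.add_apply, Finset.sum_add_distrib, h1, h2, and_self]

theorem one_mem_WtSp {n : ℕ} : (1 : PolyRing n) ∈ WtSp n 0 0 := by
  classical
  intro d hd
  rw [mem_support_iff, coeff_one] at hd
  have : d = 0 := by by_contra h; exact hd (if_neg (Ne.symm h))
  simp [this]

theorem prod_mem_WtSp {n : ℕ} {ι : Type*} (s : Finset ι) {f : ι → PolyRing n} {A B : ι → ℕ}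
    (h : ∀ k ∈ s, f k ∈ WtSp n (A k) (B k)) :
    ∏ k ∈ s, f k ∈ WtSp n (∑ k ∈ s, A k) (∑ k ∈ s, B k) := by
  classical
  induction s using Finset.induction_on with
  | empty => simpa using one_mem_WtSp
  | insert k s hk ih =>
    rw [Finset.prod_insert hk, Finset.sum_insert hk, Finset.sum_insert hk]
    exact mul_mem_WtSp (h k (by simp)) (ih fun l hl => h l (by simp [hl]))

theorem sum_mapDomain {n : ℕ} (σ : Equiv.Perm (Fin n)) (α : Fin n →₀ ℕ) :
    ∑ l, α.mapDomain σ l = ∑ l, α l := by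
  simp only [Finsupp.mapDomain_equiv_apply]
  exact Equiv.sum_comp σ.symm α

theorem alternant_mem_WtSp {n : ℕ} (α β : Fin n →₀ ℕ) :
    alternant α β ∈ WtSp n (∑ l, α l) (∑ l, β l) := by
  intro d hd
  rw [mem_support_iff, ← sumElim_comapDomain d, ← coeff_toIter] at hd
  obtain ⟨σ, h1, h2⟩ := exists_of_coeff_alternant_ne_zero hd
  rw [← sumElim_comapDomain d, ← h1, ← h2]
  simp only [Finsupp.sumElim_inl, Finsupp.sumElim_inr]
  exact ⟨sum_mapDomain σ α, sum_mapDomain σ β⟩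

/-! ### Realising every `r`-lexicographically increasing vector -/

/-- Hermite's identity. -/
theorem sum_add_div (r : ℕ) (hr : 0 < r) (x : ℕ) : ∑ k ∈ range r, (x + k) / r = x := by
  induction x with
  | zero =>
    refine Finset.sum_eq_zero fun k hk => ?_
    rw [zero_add, Nat.div_eq_of_lt (Finset.mem_range.1 hk)]
  | succ x ih =>
    have h1 := Finset.sum_range_succ' (fun k => (x + k) / r) r
    have h2 := Finset.sum_range_succ (fun k => (x + k) / r) r
    have h3 : ∑ k ∈ range r, (x + 1 + k) / r = ∑ k ∈ range r, (x + (k + 1)) / r :=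
      Finset.sum_congr rfl fun k _ => by rw [add_assoc, add_comm 1 k]
    rw [Nat.add_div_right _ hr] at h2
    rw [add_zero] at h1
    rw [h3]
    omega

/-- Among the `r` shifts, exactly `r - (y - x)` put `x ≤ y` in the same block of length `r`. -/
theorem sum_ite_div_eq (r : ℕ) (hr : 0 < r) {x y : ℕ} (hxy : x ≤ y) :
    ∑ k ∈ range r, (if (x + k) / r = (y + k) / r then 1 else 0) = r - (y - x) := by
  rcases le_or_gt r (y - x) with h | h
  · rw [Nat.sub_eq_zero_of_le h]
    refine Finset.sum_eq_zero fun k _ => if_neg ?_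
    have : (x + k) / r + 1 ≤ (y + k) / r := by
      rw [← Nat.add_div_right _ hr]
      exact Nat.div_le_div_right (by omega)
    omega
  · have key : ∀ k ∈ range r,
        (if (x + k) / r = (y + k) / r then 1 else 0) + (y + k) / r = (x + k) / r + 1 := by
      intro k _
      have h1 : (x + k) / r ≤ (y + k) / r := Nat.div_le_div_right (by omega)
      have h2 : (y + k) / r ≤ (x + k) / r + 1 := by
        rw [← Nat.add_div_right _ hr]
        exact Nat.div_le_div_right (by omega)
      split_ifs <;> omega
    have := Finset.sum_congr rfl key
    rw [Finset.sum_add_distrib, Finset.sum_add_distrib, sum_add_div r hr, sum_add_div r hr] at this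
    simp only [Finset.sum_const, Finset.card_range, smul_eq_mul, mul_one] at this
    omega

/-- Exactly one of the `r` shifts puts `x` at the end of its block. -/
theorem sum_ite_div_succ (r : ℕ) (hr : 0 < r) (x e : ℕ) :
    ∑ k ∈ range r, (if (x + 1 + k) / r = (x + k) / r then 0 else e) = e := by
  have key : ∀ k ∈ range r, (if (x + 1 + k) / r = (x + k) / r then 0 else e) + e * ((x + k) / r)
      = e * ((x + 1 + k) / r) := by
    intro k _
    have h1 : (x + k) / r ≤ (x + 1 + k) / r := Nat.div_le_div_right (by omega)
    have h2 : (x + 1 + k) / r ≤ (x + k) / r + 1 := by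
      rw [← Nat.add_div_right _ hr]
      exact Nat.div_le_div_right (by omega)
    split_ifs with h
    · rw [h, zero_add]
    · have : (x + 1 + k) / r = (x + k) / r + 1 := by omega
      rw [this]; ring
  have := Finset.sum_congr rfl key
  rw [Finset.sum_add_distrib, ← Finset.mul_sum, ← Finset.mul_sum, sum_add_div r hr,
    sum_add_div r hr] at this
  linarith

theorem lt_of_adjacent {n : ℕ} {α β : Fin n →₀ ℕ} (hα : Monotone α)
    (h : ∀ i j : Fin n, (i : ℕ) + 1 = j → α i = α j → β i < β j) (i j : Fin n) (hij : i < j)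
    (he : α i = α j) : β i < β j := by
  obtain ⟨j, hj⟩ := j
  induction j with
  | zero => exact absurd hij (by simp [Fin.lt_def])
  | succ j ih =>
    have hj' : j < n := by omega
    have hle : i ≤ ⟨j, hj'⟩ := by
      rw [Fin.lt_def] at hij
      rw [Fin.le_def]
      simp only at hij ⊢
      omega
    have h1 := hα hle
    have h2 : α ⟨j, hj'⟩ ≤ α ⟨j + 1, hj⟩ := hα (by simp [Fin.le_def])
    have h3 := h ⟨j, hj'⟩ ⟨j + 1, hj⟩ rfl (by omega)
    rcases hle.eq_or_lt with heq | hlt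
    · rw [heq]; exact h3
    · exact (ih hj' hlt (by omega)).trans h3

theorem filter_lt_succ {n : ℕ} {i j : Fin n} (hij : (i : ℕ) + 1 = j) :
    univ.filter (fun l => l < j) = insert i (univ.filter (fun l => l < i)) := by
  ext l
  simp only [mem_filter, mem_univ, true_and, mem_insert, Fin.lt_def, Fin.ext_iff]
  omega

/-- The witness is a product of `r` alternants, indexed by the shifts `k = 0, …, r - 1`. The
`k`-th one has `x`-exponents `⌊(a_j + k) / r⌋`, which add up to `a_j`. Its `y`-exponent at `j`
is the number of `i < j` in the same block (that is, with `⌊(a_i + k) / r⌋ = ⌊(a_j + k) / r⌋`),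
which sums to the lower bound for `b_j`; the excess of `b_j` over that bound is added at the unique
shift for which `a_j` is the last integer of its block. -/
theorem exists_hasLead {n r : ℕ} (hr : 0 < r) {a b : Fin n →₀ ℕ} (h : NatRLex r a b) :
    ∃ f ∈ Ar n r, f ∈ WtSp n (∑ l, a l) (∑ l, b l) ∧ HasLead f a b := by
  obtain ⟨hmono, hadj, hlow⟩ := h
  let e : Fin n → ℕ := fun j => b j - ∑ i ∈ univ.filter (fun i => i < j), (r - (a j - a i))
  let α : ℕ → Fin n →₀ ℕ := fun k => Finsupp.equivFunOnFinite.symm fun j => (a j + k) / r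
  let β : ℕ → Fin n →₀ ℕ := fun k => Finsupp.equivFunOnFinite.symm fun j =>
    (∑ i ∈ univ.filter (fun i => i < j), if (a i + k) / r = (a j + k) / r then 1 else 0) +
      if (a j + 1 + k) / r = (a j + k) / r then 0 else e j
  have hαk (k j) : α k j = (a j + k) / r := rfl
  have hβk (k j) : β k j =
      (∑ i ∈ univ.filter (fun i => i < j), if (a i + k) / r = (a j + k) / r then 1 else 0) +
        if (a j + 1 + k) / r = (a j + k) / r then 0 else e j := rfl
  have hαmono (k) : Monotone (α k) := by
    intro i j hij
    rw [hαk, hαk]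
    exact Nat.div_le_div_right (Nat.add_le_add_right (hmono hij) k)
  have hβadj (k) (i j : Fin n) (hij : (i : ℕ) + 1 = j) (hα : α k i = α k j) :
      β k i < β k j := by
    rw [hαk, hαk] at hα
    have hle : a i ≤ a j := hmono (by rw [Fin.le_def]; omega)
    rw [hβk, hβk, filter_lt_succ hij, Finset.sum_insert (by simp), if_pos hα, hα]
    have hextra : (if (a i + 1 + k) / r = (a j + k) / r then 0 else e i) ≤
        if (a j + 1 + k) / r = (a j + k) / r then 0 else e j := by
      split_ifs with h1 h2 h2
      · exact le_rfl
      · exact Nat.zero_le _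
      · exfalso
        have e1 : (a i + k) / r ≤ (a i + 1 + k) / r := Nat.div_le_div_right (by omega)
        have e2 : (a i + 1 + k) / r ≤ (a j + 1 + k) / r := Nat.div_le_div_right (by omega)
        omega
      · have haij : a i = a j := by
          -- the block ends right after `a i` but contains `a j`
          by_contra hne
          have e1 : (a i + k) / r ≤ (a i + 1 + k) / r := Nat.div_le_div_right (by omega)
          have e2 : (a i + 1 + k) / r ≤ (a j + k) / r := Nat.div_le_div_right (by omega)
          omega
        have h3 := hadj i j hij haij
        have h4 := hlow i
        simp only [e]
        rw [filter_lt_succ hij, Finset.sum_insert (by simp), ← haij]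
        omega
    omega
  have hlead (k) := hasLead_alternant (hαmono k)
    (lt_of_adjacent (hαmono k) (hβadj k))
  have hsa : ∑ k : Fin r, α k = a := by
    ext j
    rw [Finsupp.finsetSum_apply, Fin.sum_univ_eq_sum_range (fun k => α k j)]
    simp only [hαk]
    exact sum_add_div r hr (a j)
  have hsb : ∑ k : Fin r, β k = b := by
    ext j
    rw [Finsupp.finsetSum_apply, Fin.sum_univ_eq_sum_range (fun k => β k j)]
    simp only [hβk]
    rw [Finset.sum_add_distrib, Finset.sum_comm, sum_ite_div_succ r hr]
    rw [Finset.sum_congr rfl fun i hi =>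
      sum_ite_div_eq r hr (hmono (by simpa using hi : i < j).le)]
    exact Nat.add_sub_cancel' (hlow j)
  refine ⟨∏ k : Fin r, alternant (α k) (β k), Submodule.subset_span
    ⟨fun k => alternant (α k) (β k), fun k => isAlternating_alternant _ _, rfl⟩, ?_, ?_⟩
  · have := prod_mem_WtSp (univ : Finset (Fin r))
      (fun k _ => alternant_mem_WtSp (α k) (β k))
    rw [Finset.sum_comm,
      Finset.sum_comm (s := univ) (t := univ) (f := fun (k : Fin r) l => β k l)] at this
    simpa only [← Finsupp.finsetSum_apply, hsa, hsb] using this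
  · have := HasLead.prod (univ : Finset (Fin r)) (fun k _ => hlead k)
    rwa [hsa, hsb] at this

end Algebra

/-! ### Counting leading exponents -/

/-- If every nonzero element of `V` is detected by a functional `c s`, `s ∈ S`, and each `s ∈ S`
is the top index of some element of `V`, then `dim V = |S|`: evaluation `V → K^S` is injective,
and elements with distinct top indices are linearly independent. -/
theorem finrank_eq_ncard_of_triangular {K M ι : Type*} [Field K] [AddCommGroup M] [Module K M]
    [LinearOrder ι] (V : Submodule K M) (c : ι → M →ₗ[K] K) (S : Set ι) (hS : S.Finite)
    (h1 : ∀ f ∈ V, f ≠ 0 → ∃ s ∈ S, c s f ≠ 0)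
    (h2 : ∀ s ∈ S, ∃ f ∈ V, c s f ≠ 0 ∧ ∀ t, s < t → c t f = 0) :
    Module.finrank K V = S.ncard := by
  classical
  have : Fintype S := hS.fintype
  rw [← Nat.card_coe_set_eq, Nat.card_eq_fintype_card]
  let Φ : V →ₗ[K] (S → K) := LinearMap.pi fun s => (c s).comp V.subtype
  have hinj : Function.Injective Φ := by
    rw [← LinearMap.ker_eq_bot, LinearMap.ker_eq_bot']
    intro f hf
    by_contra hne
    obtain ⟨s, hs, hsf⟩ := h1 f f.2 (by simpa using hne)
    exact hsf (congrFun hf ⟨s, hs⟩)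
  have : FiniteDimensional K V := FiniteDimensional.of_injective Φ hinj
  refine le_antisymm ?_ ?_
  · simpa using LinearMap.finrank_le_finrank_of_injective hinj
  · choose! f hfV hf1 hf2 using h2
    let v : S → V := fun s => ⟨f s, hfV s s.2⟩
    have hv : LinearIndependent K v := by
      rw [Fintype.linearIndependent_iff]
      intro k hk
      by_contra! hne
      let T := univ.filter fun s => k s ≠ 0
      have hT : T.Nonempty := by
        obtain ⟨s, hs⟩ := hne
        exact ⟨s, by simpa [T] using hs⟩
      let s := T.max' hT
      have hs : k s ≠ 0 := by simpa [T] using T.max'_mem hT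
      have h3 := congrArg (fun w : V => c s w) hk
      simp only [AddSubmonoidClass.coe_finsetSum, Submodule.coe_smul, map_sum, map_smul,
        Submodule.coe_zero, map_zero] at h3
      rw [Finset.sum_eq_single s] at h3
      · exact mul_ne_zero hs (hf1 s s.2) h3
      · intro t _ hts
        rcases lt_or_gt_of_ne hts with hlt | hlt
        · rw [hf2 t t.2 s hlt, smul_zero]
        · have : k t = 0 := by
            by_contra hkt
            exact absurd (T.le_max' t (by simpa [T] using hkt)) (not_le.2 hlt)
          rw [this, zero_smul]
      · simp
    exact hv.fintype_card_le_finrank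

theorem natRLex_iff {n r : ℕ} (a b : Fin n →₀ ℕ) :
    NatRLex r a b ↔ RLexNN n r (fun i => (a i : ℤ)) (fun i => (b i : ℤ)) := by
  have hsub (hm : Monotone a) (j : Fin n) :
      ∑ i ∈ univ.filter (fun i => i < j), max ((r : ℤ) - ((a j : ℤ) - a i)) 0 =
        ((∑ i ∈ univ.filter (fun i => i < j), (r - (a j - a i)) : ℕ) : ℤ) := by
    rw [Nat.cast_sum]
    refine Finset.sum_congr rfl fun i hi => ?_
    have := hm (by simpa using hi : i < j).le
    omega
  constructor
  · rintro ⟨h1, h2, h3⟩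
    refine ⟨fun h => Nat.cast_nonneg _, fun i j hij => Nat.cast_le.2 (h1 hij), ?_, ?_⟩
    · intro i h heq
      have := h2 i ⟨i + 1, h⟩ rfl (Nat.cast_injective (R := ℤ) heq)
      beta_reduce
      exact_mod_cast this
    · intro j
      beta_reduce
      rw [hsub h1]
      exact_mod_cast h3 j
  · rintro ⟨_, h1, h2, h3⟩
    have h1' : Monotone a := fun i j hij => (Nat.cast_le (α := ℤ)).1 (h1 hij)
    refine ⟨h1', ?_, ?_⟩
    · intro i j hij heq
      have hj : j = ⟨i + 1, by omega⟩ := Fin.ext hij.symm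
      have := h2 i (by omega) (by rw [← hj]; exact congrArg Nat.cast heq)
      rw [← hj] at this
      beta_reduce at this
      exact_mod_cast this
    · intro j
      have := h3 j
      beta_reduce at this
      rw [hsub h1'] at this
      exact_mod_cast this

theorem RLexNN.nonneg {n : ℕ} {r : ℤ} {a b : Fin n → ℤ} (h : RLexNN n r a b) :
    0 ≤ a ∧ 0 ≤ b := by
  obtain ⟨h0, h1, _, h3⟩ := h
  refine ⟨fun i => ?_, fun j => ?_⟩
  · have hn : 0 < n := i.pos
    exact (h0 hn).trans (h1 (by simp [Fin.le_def]))
  · exact (Finset.sum_nonneg fun i _ => le_max_right _ _).trans (h3 j)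

/-- The combined order on exponent pairs: `x`-exponents first, then `y`-exponents. -/
def pairSyn (n : ℕ) :
    (Fin n →₀ ℕ) × (Fin n →₀ ℕ) ≃ (colexOrder n).syn ×ₗ (colexOrder n).syn :=
  ((colexOrder n).toSyn.toEquiv.prodCongr (colexOrder n).toSyn.toEquiv).trans toLex

/-- The coefficient of `x^a y^b`, for `p = (a, b)`, as a linear functional. -/
def coeffPair {n : ℕ} (p : (Fin n →₀ ℕ) × (Fin n →₀ ℕ)) : PolyRing n →ₗ[ℂ] ℂ :=
  MvPolynomial.lcoeff ℂ (Finsupp.sumElim p.1 p.2)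

theorem coeffPair_apply {n : ℕ} (p : (Fin n →₀ ℕ) × (Fin n →₀ ℕ)) (f : PolyRing n) :
    coeffPair p f = MvPolynomial.coeff p.2 (MvPolynomial.coeff p.1 (toIter n f)) := by
  rw [coeff_toIter]
  rfl

theorem HasLead.coeffPair_ne_zero {n : ℕ} {f : PolyRing n} {a b : Fin n →₀ ℕ}
    (h : HasLead f a b) : coeffPair (a, b) f ≠ 0 := by
  obtain ⟨h0, rfl, rfl⟩ := h
  have hF : toIter n f ≠ 0 := by simpa using h0
  rw [coeffPair_apply]
  exact (colexOrder n).coeff_degree_ne_zero_iff.2 ((colexOrder n).leadingCoeff_ne_zero_iff.2 hF)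

theorem HasLead.coeffPair_eq_zero {n : ℕ} {f : PolyRing n} {a b : Fin n →₀ ℕ}
    (h : HasLead f a b) (p : (Fin n →₀ ℕ) × (Fin n →₀ ℕ)) (hp : pairSyn n (a, b) < pairSyn n p) :
    coeffPair p f = 0 := by
  obtain ⟨h0, rfl, rfl⟩ := h
  rw [coeffPair_apply]
  rcases Prod.Lex.lt_iff.1 hp with hlt | ⟨heq, hlt⟩
  · rw [(colexOrder n).coeff_eq_zero_of_lt hlt, MvPolynomial.coeff_zero]
  · have : (colexOrder n).degree (toIter n f) = p.1 := (colexOrder n).toSyn.injective heq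
    rw [← this]
    exact (colexOrder n).coeff_eq_zero_of_lt hlt

/-- Corollary 3.2 of the paper, coefficient-wise: the dimension of the
weight-`(A,B)` subspace `A^r_{(A,B)}` of `A^r` equals the number of `r`-lexicographically
increasing vectors in `ℤ²_{≥0}` with coordinate sums `(A,B)`. -/
theorem dim_weight_space_Ar (n : ℕ) (hn : 1 ≤ n) (r : ℕ) (hr : 1 ≤ r) (A B : ℕ) :
    Module.finrank ℂ ↥(Ar n r ⊓ WtSp n A B) =
      Set.ncard {p : (Fin n → ℤ) × (Fin n → ℤ) |
        RLexNN n (r : ℤ) p.1 p.2 ∧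
          (∑ j, p.1 j) = (A : ℤ) ∧ (∑ j, p.2 j) = (B : ℤ)} := by
  let S : Set ((Fin n →₀ ℕ) × (Fin n →₀ ℕ)) :=
    {p | NatRLex r p.1 p.2 ∧ ∑ j, p.1 j = A ∧ ∑ j, p.2 j = B}
  have hSfin : S.Finite := by
    refine Set.Finite.subset
      (Finset.finite_toSet ((univ.finsuppAntidiag A) ×ˢ (univ.finsuppAntidiag B))) ?_
    rintro ⟨a, b⟩ ⟨_, h1, h2⟩
    simp [h1, h2]
  have hmem : ∀ f ∈ Ar n r ⊓ WtSp n A B, f ≠ 0 → ∃ p ∈ S, coeffPair p f ≠ 0 := by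
    rintro f ⟨hfA, hfW⟩ hf0
    have hlead : HasLead f _ _ := ⟨hf0, rfl, rfl⟩
    have hne := hlead.coeffPair_ne_zero
    have hw := hfW _ (MvPolynomial.mem_support_iff.2 hne)
    exact ⟨_, ⟨natRLex_of_mem_Ar hfA hf0, hw⟩, hne⟩
  have hfin : Module.finrank ℂ ↥(Ar n r ⊓ WtSp n A B) = (Set.image (pairSyn n) S).ncard := by
    refine finrank_eq_ncard_of_triangular _ (fun s => coeffPair ((pairSyn n).symm s)) _
      (hSfin.image _) ?_ ?_
    · intro f hf hf0
      obtain ⟨p, hp, hpf⟩ := hmem f hf hf0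
      exact ⟨_, ⟨p, hp, rfl⟩, by simpa using hpf⟩
    · rintro _ ⟨⟨a, b⟩, ⟨hab, hA, hB⟩, rfl⟩
      obtain ⟨f, hfA, hfW, hlead⟩ := exists_hasLead hr hab
      simp only at hA hB
      rw [hA, hB] at hfW
      refine ⟨f, ⟨hfA, hfW⟩, by simpa using hlead.coeffPair_ne_zero, fun t ht => ?_⟩
      exact hlead.coeffPair_eq_zero _ (by simpa using ht)
  rw [hfin, Set.ncard_image_of_injective _ (pairSyn n).injective]
  -- Transport the count along the coordinatewise cast `ℕ → ℤ`.
  let ψ : (Fin n →₀ ℕ) × (Fin n →₀ ℕ) → (Fin n → ℤ) × (Fin n → ℤ) :=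
    fun p => (fun i => (p.1 i : ℤ), fun i => (p.2 i : ℤ))
  have hψ : Function.Injective ψ := by
    rintro ⟨a, b⟩ ⟨a₁, b₁⟩ h
    simp only [ψ, Prod.mk.injEq, funext_iff, Nat.cast_inj] at h
    exact Prod.ext (Finsupp.ext h.1) (Finsupp.ext h.2)
  rw [← Set.ncard_image_of_injective S hψ]
  congr 1
  ext ⟨a, b⟩
  constructor
  · rintro ⟨⟨u, v⟩, ⟨h1, h2, h3⟩, h4⟩
    obtain ⟨rfl, rfl⟩ := Prod.mk.inj h4
    simp only at h2 h3
    refine ⟨(natRLex_iff u v).1 h1, ?_, ?_⟩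
    · simp only
      exact_mod_cast h2
    · simp only
      exact_mod_cast h3
  · rintro ⟨h1, h2, h3⟩
    obtain ⟨ha, hb⟩ := h1.nonneg
    lift a to Fin n → ℕ using ha
    lift b to Fin n → ℕ using hb
    simp only at h2 h3
    refine ⟨(Finsupp.equivFunOnFinite.symm a, Finsupp.equivFunOnFinite.symm b),
      ⟨(natRLex_iff _ _).2 h1, ?_, ?_⟩, rfl⟩
    · change ∑ j, a j = A
      exact_mod_cast h2
    · change ∑ j, b j = B
      exact_mod_cast h3

end
end

section
/- Let n ≥ 1 and r ≥ 1 be integers. The r-fold dilation r·P_n ⊆ ℝ^{2n} of the convex hull P_n of the set of all vectors (a_1,b_1,…,a_n,b_n) ∈ ℤ^{2n}_{≥0} with (a_1,b_1) < (a_2,b_2) < ⋯ < (a_n,b_n) in lexicographic order equals the set of all (a_1,b_1,…,a_n,b_n) ∈ ℝ^{2n} such that: 0 ≤ a_1 ≤ a_2 ≤ ⋯ ≤ a_n; for each j = 1,…,n−1, if a_j = a_{j+1} then b_{j+1} ≥ b_j + r; and b_j ≥ Σ_{i=1}^{j−1} max{r−(a_j−a_i), 0} for all 1 ≤ j ≤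 n. -/
/-!
Dividing by `r` reduces the claim to `r = 1`, where the right-hand side is the set
`hullDesc n 1` and the generators are the integer points `lexPoints n`.

*Hull inside description.* `hullDesc n 1` is convex: `max (1 - (a_j - a_i)) 0` is convex in `a`, and
for monotone `a`, `a'` a proper convex combination has a tie at `j, j + 1` only if both have one.
It contains the generators because there `∑_{i<j} max (1 - (A_j - A_i)) 0` counts the `i < j` with
`A_i = A_j`, and the corresponding `B_i` are distinct elements of `[0, B_j)`.

*Description inside hull.* Given `(a, b)` in the description, pick `θ ∈ (0, 1]` uniformly and round
`A_j = ⌊a_j⌋ + [1 - fract a_j ≤ θ]`. This is monotone in `j`, has mean `a_j`, and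
`A_i = A_j` (for `a_i ≤ a_j`) has probability exactly `max (1 - (a_j - a_i)) 0`
(`integral_roundUp`, `unif_roundUp_eq`). Hence `#{i < j | A_i = A_j}` has mean
`F_j = ∑_{i<j} max (1 - (a_j - a_i)) 0`. The slack `c_j = b_j - F_j ≥ 0` is put on the event `E_j`
that `A_j < A_k` for every `k` with `a_j < a_k`, which has positive probability:
`B_j = #{i < j | A_i = A_j} + [E_j] c_j / P(E_j)` has mean `b_j`. A tie `A_j = A_{j+1}` either comes
from `a_j = a_{j+1}`, when `E_j = E_{j+1}` and `c_j ≤ c_{j+1}`, or happens outside `E_j`;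
in both cases `B_{j+1} ≥ B_j + 1`. So `(a, b)` is an average of points with integral `A` and real `B`
(`mem_convexHull_of_hullDesc`), and rounding `B` in the same way makes these averages of generators
(`real_heights_mem`). Only finitely many roundings occur, so each average is a finite convex
combination (`average_mem_convexHull`).
-/

open Finset Pointwise MeasureTheory

noncomputable section

namespace DilatedHull

/-- The integer points whose convex hull is `P_n`. -/
def lexPoints (n : ℕ) : Set ((Fin n → ℝ) × (Fin n → ℝ)) :=
  {p : (Fin n → ℝ) × (Fin n → ℝ) |
          ∃ A B : Fin n → ℤ,
            (∀ j, 0 ≤ A j) ∧ (∀ j, 0 ≤ B j) ∧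
            (∀ i : Fin n, ∀ h : (i : ℕ) + 1 < n,
              A i < A ⟨(i : ℕ) + 1, h⟩ ∨
                (A i = A ⟨(i : ℕ) + 1, h⟩ ∧ B i < B ⟨(i : ℕ) + 1, h⟩)) ∧
            p.1 = (fun j => ((A j : ℤ) : ℝ)) ∧ p.2 = (fun j => ((B j : ℤ) : ℝ))}

/-- The claimed description of `r·P_n`, for a real dilation factor `r`. -/
def hullDesc (n : ℕ) (r : ℝ) : Set ((Fin n → ℝ) × (Fin n → ℝ)) :=
  {p : (Fin n → ℝ) × (Fin n → ℝ) |
        (∀ h : 0 < n, 0 ≤ p.1 ⟨0, h⟩) ∧ Monotone p.1 ∧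
        (∀ i : Fin n, ∀ h : (i : ℕ) + 1 < n,
          p.1 i = p.1 ⟨(i : ℕ) + 1, h⟩ → p.2 i + r ≤ p.2 ⟨(i : ℕ) + 1, h⟩) ∧
        (∀ j : Fin n,
          (∑ i ∈ univ.filter (fun i => i < j), max (r - (p.1 j - p.1 i)) 0) ≤ p.2 j)}

/-! ### Scaling -/

lemma smul_mem_hullDesc {n : ℕ} {r s : ℝ} (hs : 0 < s) {p : (Fin n → ℝ) × (Fin n → ℝ)}
    (hp : p ∈ hullDesc n r) : s • p ∈ hullDesc n (s * r) := by
  obtain ⟨h0, hm, ht, hb⟩ := hp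
  refine ⟨fun h => mul_nonneg hs.le (h0 h), fun i j hij => ?_, fun i h e => ?_, fun j => ?_⟩
  · exact mul_le_mul_of_nonneg_left (hm hij) hs.le
  · have e' : s * p.1 i = s * p.1 ⟨(i : ℕ) + 1, h⟩ := e
    have := ht i h (mul_left_cancel₀ hs.ne' e')
    change s * p.2 i + s * r ≤ s * p.2 _
    nlinarith
  · change ∑ i ∈ univ.filter (fun i => i < j), max (s * r - (s * p.1 j - s * p.1 i)) 0 ≤ s * p.2 j
    refine le_trans (le_of_eq ?_) (mul_le_mul_of_nonneg_left (hb j) hs.le)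
    rw [Finset.mul_sum]
    refine Finset.sum_congr rfl fun i _ => ?_
    rw [mul_max_of_nonneg _ _ hs.le]
    congr 1 <;> ring

/-! ### The hull satisfies the description -/

lemma strictMono_of_lt_next {α : Type*} [Preorder α] {n : ℕ} {f : Fin n → α}
    (hf : ∀ i : Fin n, ∀ h : (i : ℕ) + 1 < n, f i < f ⟨(i : ℕ) + 1, h⟩) : StrictMono f := by
  cases n with
  | zero => exact fun i => i.elim0
  | succ m =>
    rw [Fin.strictMono_iff_lt_succ]
    intro i
    exact hf i.castSucc (by simp)

lemma lexPoints_subset (n : ℕ) : lexPoints n ⊆ hullDesc n 1 := by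
  rintro ⟨x, y⟩ ⟨A, B, hA, hB, hl, hx, hy⟩
  simp only at hx hy
  subst hx hy
  have hlex : StrictMono (fun j => toLex (A j, B j)) :=
    strictMono_of_lt_next fun i h => by
      rw [Prod.Lex.toLex_lt_toLex]; exact hl i h
  have hlt : ∀ i j, i < j → A i < A j ∨ (A i = A j ∧ B i < B j) := fun i j hij => by
    have := hlex hij
    rwa [Prod.Lex.toLex_lt_toLex] at this
  refine ⟨fun h => by simpa using hA _, ?_, fun i h e => ?_, fun j => ?_⟩
  · intro i j hij
    rcases hij.eq_or_lt with rfl | hij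
    · rfl
    · have : A i ≤ A j := by rcases hlt i j hij with h | h <;> omega
      simp only
      exact_mod_cast this
  · simp only at e
    have e' : A i = A ⟨(i : ℕ) + 1, h⟩ := by exact_mod_cast e
    have : B i + 1 ≤ B ⟨(i : ℕ) + 1, h⟩ := by
      rcases hl i h with h | h <;> omega
    simp only
    exact_mod_cast this
  · have hterm : ∀ i ∈ univ.filter (fun i => i < j),
        max ((1 : ℝ) - ((A j : ℝ) - (A i : ℝ))) 0 = if A i = A j then 1 else 0 := by
      intro i hi
      rw [Finset.mem_filter] at hi
      split_ifs with e
      · simp [e]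
      · have : A i + 1 ≤ A j := by rcases hlt i j hi.2 with h | h <;> omega
        have : (A i : ℝ) + 1 ≤ A j := by exact_mod_cast this
        exact max_eq_right (by linarith)
    simp only
    rw [Finset.sum_congr rfl hterm, Finset.sum_boole]
    have hcard : ((univ.filter (fun i => i < j)).filter (fun i => A i = A j)).card
        ≤ (Finset.Ico 0 (B j)).card := by
      refine Finset.card_le_card_of_injOn B ?_ ?_
      · intro i hi
        simp only [Finset.coe_filter, Finset.mem_filter, Set.mem_ofPred_eq] at hi
        simp only [Finset.coe_Ico, Set.mem_Ico]
        refine ⟨hB i, ?_⟩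
        rcases hlt i j hi.1.2 with h | h <;> omega
      · intro i hi k hk e
        simp only [Finset.coe_filter, Finset.mem_filter, Set.mem_ofPred_eq] at hi hk
        rcases lt_trichotomy i k with h | h | h
        · rcases hlt i k h with h | h <;> omega
        · exact h
        · rcases hlt k i h with h | h <;> omega
    rw [Int.card_Ico] at hcard
    have hj := hB j
    have : (((univ.filter (fun i => i < j)).filter (fun i => A i = A j)).card : ℤ) ≤ B j := by
      omega
    exact_mod_cast this

lemma convex_hullDesc (n : ℕ) : Convex ℝ (hullDesc n 1) := by
  rintro p ⟨p0, pm, pt, pb⟩ q ⟨q0, qm, qt, qb⟩ s t hs ht hst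
  -- The endpoint weights must be split off: ties are inherited only by proper combinations.
  rcases hs.eq_or_lt with rfl | hs'
  · obtain rfl : t = 1 := by linarith
    rw [zero_smul, one_smul, zero_add]
    exact ⟨q0, qm, qt, qb⟩
  rcases ht.eq_or_lt with rfl | ht'
  · obtain rfl : s = 1 := by linarith
    rw [zero_smul, one_smul, add_zero]
    exact ⟨p0, pm, pt, pb⟩
  refine ⟨fun h => ?_, fun i j hij => ?_, fun i h e => ?_, fun j => ?_⟩
  · have := p0 h; have := q0 h
    change 0 ≤ s * p.1 _ + t * q.1 _
    positivity
  · change s * p.1 _ + t * q.1 _ ≤ s * p.1 _ + t * q.1 _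
    have := pm hij; have := qm hij
    gcongr
  · change s * p.1 _ + t * q.1 _ = s * p.1 _ + t * q.1 _ at e
    change s * p.2 _ + t * q.2 _ + 1 ≤ s * p.2 _ + t * q.2 _
    have hle : i ≤ ⟨(i : ℕ) + 1, h⟩ := by rw [Fin.le_def]; simp
    have h1 := pm hle
    have h2 := qm hle
    have e1 := pt i h (by nlinarith)
    have e2 := qt i h (by nlinarith)
    nlinarith
  · change ∑ i ∈ univ.filter (fun i => i < j),
      max ((1 : ℝ) - ((s * p.1 j + t * q.1 j) - (s * p.1 i + t * q.1 i))) 0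
        ≤ s * p.2 j + t * q.2 j
    have h1 := mul_le_mul_of_nonneg_left (pb j) hs
    have h2 := mul_le_mul_of_nonneg_left (qb j) ht
    refine le_trans ?_ (add_le_add h1 h2)
    rw [Finset.mul_sum, Finset.mul_sum, ← Finset.sum_add_distrib]
    refine Finset.sum_le_sum fun i _ => ?_
    refine max_le ?_ (by positivity)
    have := mul_le_mul_of_nonneg_left (le_max_left (1 - (p.1 j - p.1 i)) 0) hs
    have := mul_le_mul_of_nonneg_left (le_max_left (1 - (q.1 j - q.1 i)) 0) ht
    linarith

/-! ### Averages of finitely many roundings -/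

/-- The uniform distribution on `(0, 1]`. -/
def unif : Measure ℝ := volume.restrict (Set.Ioc 0 1)

instance : IsProbabilityMeasure unif := ⟨by simp [unif]⟩

/-- The pattern of thresholds `t_j` that are at most `θ`. -/
def pattern {n : ℕ} (t : Fin n → ℝ) (θ : ℝ) : Fin n → Bool := fun j => decide (t j ≤ θ)

lemma measurable_pattern {n : ℕ} (t : Fin n → ℝ) : Measurable (pattern t) := by
  refine measurable_pi_lambda _ fun j => ?_
  refine measurable_to_bool ?_
  have : (fun θ => pattern t θ j) ⁻¹' {true} = Set.Ici (t j) := by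
    ext θ; simp [pattern]
  rw [this]
  exact measurableSet_Ici

lemma integrable_comp_pattern {n : ℕ} {E : Type*} [NormedAddCommGroup E]
    (t : Fin n → ℝ) (g : (Fin n → Bool) → E) :
    Integrable (fun θ => g (pattern t θ)) unif := by
  have : Integrable g (unif.map (pattern t)) := by
    have : IsProbabilityMeasure (unif.map (pattern t)) :=
      Measure.isProbabilityMeasure_map (measurable_pattern t).aemeasurable
    exact Integrable.of_finite
  exact this.comp_measurable (measurable_pattern t)

/-- The mean of a random point that depends only on the pattern of `θ` lies in the convex hull of
the values; closedness of the hull is not needed because only finitely many values occur. -/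
lemma average_mem_convexHull {n : ℕ} (t : Fin n → ℝ)
    (g : (Fin n → Bool) → (Fin n → ℝ) × (Fin n → ℝ)) (S : Set ((Fin n → ℝ) × (Fin n → ℝ)))
    (hS : ∀ θ, g (pattern t θ) ∈ S) :
    ((fun j => ∫ θ, (g (pattern t θ)).1 j ∂unif), (fun j => ∫ θ, (g (pattern t θ)).2 j ∂unif))
      ∈ convexHull ℝ S := by
  have : IsProbabilityMeasure (unif.map (pattern t)) :=
    Measure.isProbabilityMeasure_map (measurable_pattern t).aemeasurable
  set ν := unif.map (pattern t) with hν
  have key : ∀ φ : (Fin n → Bool) → ℝ,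
      ∫ θ, φ (pattern t θ) ∂unif = ∑ s, ν.real {s} * φ s := by
    intro φ
    rw [← integral_map (measurable_pattern t).aemeasurable
      (Measurable.of_discrete (f := φ)).aestronglyMeasurable,
      integral_fintype Integrable.of_finite]
    rfl
  have hsum : ∑ s, ν.real {s} = 1 := by
    simp
  -- Patterns outside the range of `pattern t` have weight zero and are replaced by a harmless value.
  classical
  let g' : (Fin n → Bool) → (Fin n → ℝ) × (Fin n → ℝ) := fun s =>
    if s ∈ Set.range (pattern t) then g s else g (pattern t 0)
  have hg' : ∀ s, ν.real {s} • g' s = ν.real {s} • g s := by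
    intro s
    by_cases h : s ∈ Set.range (pattern t)
    · simp only [g', if_pos h]
    · have : ν.real {s} = 0 := by
        rw [hν, map_measureReal_apply (measurable_pattern t) (measurableSet_singleton s)]
        have : pattern t ⁻¹' {s} = ∅ := by
          ext θ
          simp only [Set.mem_preimage, Set.mem_singleton_iff, Set.mem_empty_iff_false, iff_false]
          exact fun e => h ⟨θ, e⟩
        simp [this]
      simp [this]
  have hmem : ∑ s, ν.real {s} • g' s ∈ convexHull ℝ S := by
    refine (convex_convexHull ℝ S).sum_mem (fun _ _ => measureReal_nonneg) hsum fun s _ => ?_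
    refine subset_convexHull ℝ S ?_
    simp only [g']
    split_ifs with h
    · obtain ⟨θ, rfl⟩ := h; exact hS θ
    · exact hS 0
  convert hmem using 1
  simp_rw [hg']
  ext j
  · refine (key (fun s => (g s).1 j)).trans ?_
    simp [Prod.fst_sum, Finset.sum_apply]
  · refine (key (fun s => (g s).2 j)).trans ?_
    simp [Prod.snd_sum, Finset.sum_apply]

/-! ### Threshold rounding of one real number -/

/-- The threshold at which the rounding of `x` jumps from `⌊x⌋` to `⌊x⌋ + 1`. -/
def thr (x : ℝ) : ℝ := 1 - Int.fract x

lemma thr_pos (x : ℝ) : 0 < thr x := by have := Int.fract_lt_one x; unfold thr; linarith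
lemma thr_le (x : ℝ) : thr x ≤ 1 := by have := Int.fract_nonneg x; unfold thr; linarith

lemma eq_floor_thr (x : ℝ) : x = ⌊x⌋ + 1 - thr x := by
  have := Int.floor_add_fract x; unfold thr; linarith

/-- Rounding with the bit `s` saying whether the threshold has been passed. -/
def roundBit (x : ℝ) (s : Bool) : ℤ := ⌊x⌋ + if s then 1 else 0

/-- Rounding of `x` at the level `θ`; for `θ ∈ [0, 1)` this is `⌊x + θ⌋`. -/
def roundUp (x θ : ℝ) : ℤ := roundBit x (decide (thr x ≤ θ))

lemma roundUp_def (x θ : ℝ) : roundUp x θ = ⌊x⌋ + if thr x ≤ θ then 1 else 0 := by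
  simp [roundUp, roundBit]

lemma roundUp_nonneg {x : ℝ} (hx : 0 ≤ x) (θ : ℝ) : 0 ≤ roundUp x θ := by
  rw [roundUp_def]
  have := Int.floor_nonneg.2 hx
  split_ifs <;> omega

lemma thr_le_thr {x y : ℝ} (h : x ≤ y) (e : ⌊x⌋ = ⌊y⌋) : thr y ≤ thr x := by
  have h1 := eq_floor_thr x
  have h2 := eq_floor_thr y
  rw [e] at h1
  linarith

lemma roundUp_mono {x y : ℝ} (h : x ≤ y) (θ : ℝ) : roundUp x θ ≤ roundUp y θ := by
  rw [roundUp_def, roundUp_def]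
  have h1 := Int.floor_le_floor h
  rcases h1.eq_or_lt with e | h1
  · have := thr_le_thr h e
    split_ifs with h2 h3
    · omega
    · exact absurd (this.trans h2) h3
    · omega
    · omega
  · split_ifs <;> omega

lemma roundUp_add_one_le {x y : ℝ} (h : x + 1 ≤ y) (θ : ℝ) :
    roundUp x θ + 1 ≤ roundUp y θ := by
  have := roundUp_mono h θ
  rw [roundUp_def (x + 1)] at this
  rw [roundUp_def x]
  have e : thr (x + 1) = thr x := by simp [thr]
  rw [e, Int.floor_add_one] at this
  linarith

lemma integral_boole (P : ℝ → Prop) [DecidablePred P] (hP : MeasurableSet {θ | P θ}) (c : ℝ) :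
    ∫ θ, (if P θ then c else 0) ∂unif = unif.real {θ | P θ} * c := by
  have : (fun θ => if P θ then c else 0) = Set.indicator {θ | P θ} (fun _ => c) := by
    ext θ; simp [Set.indicator]
  rw [this, integral_indicator_const _ hP, smul_eq_mul]

lemma unif_Ici {u : ℝ} (h0 : 0 < u) (h1 : u ≤ 1) : unif.real {θ | u ≤ θ} = 1 - u := by
  rw [unif, measureReal_restrict_apply' measurableSet_Ioc]
  have : {θ | u ≤ θ} ∩ Set.Ioc 0 1 = Set.Icc u 1 := by
    ext θ; simp only [Set.mem_inter_iff, Set.mem_ofPred_eq, Set.mem_Ioc, Set.mem_Icc]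
    constructor
    · rintro ⟨a, b, c⟩; exact ⟨a, c⟩
    · rintro ⟨a, c⟩; exact ⟨a, by linarith, c⟩
  rw [this]
  simp [Measure.real, h1]

lemma unif_Ico {u v : ℝ} (h0 : 0 < u) (h1 : v ≤ 1) :
    unif.real {θ | u ≤ θ ∧ θ < v} = max (v - u) 0 := by
  rw [unif, measureReal_restrict_apply' measurableSet_Ioc]
  have : {θ | u ≤ θ ∧ θ < v} ∩ Set.Ioc 0 1 = Set.Ico u v := by
    ext θ; simp only [Set.mem_inter_iff, Set.mem_ofPred_eq, Set.mem_Ioc, Set.mem_Ico]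
    constructor
    · rintro ⟨a, b, c⟩; exact a
    · rintro ⟨a, c⟩; exact ⟨⟨a, c⟩, by linarith, by linarith⟩
  rw [this]
  simp [Measure.real, ENNReal.toReal_ofReal']

lemma integral_roundUp (x : ℝ) : ∫ θ, (roundUp x θ : ℝ) ∂unif = x := by
  have h : ∀ θ, (roundUp x θ : ℝ) = ⌊x⌋ + if thr x ≤ θ then (1 : ℝ) else 0 := by
    intro θ; rw [roundUp_def]; push_cast; rfl
  simp_rw [h]
  have hm : MeasurableSet {θ | thr x ≤ θ} := measurableSet_Ici
  rw [integral_add (integrable_const _), integral_boole _ hm, unif_Ici (thr_pos x) (thr_le x)]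
  · have := eq_floor_thr x
    simp
    linarith
  · have : (fun θ => if thr x ≤ θ then (1 : ℝ) else 0)
        = Set.indicator {θ | thr x ≤ θ} (fun _ => 1) := by
      ext θ; simp [Set.indicator]
    rw [this]
    exact (integrable_const _).indicator hm

/-- Two reals `x ≤ y` round to the same integer with probability `max (1 - (y - x)) 0`. -/
lemma unif_roundUp_eq {x y : ℝ} (h : x ≤ y) :
    unif.real {θ | roundUp x θ = roundUp y θ} = max (1 - (y - x)) 0 := by
  have h1 := eq_floor_thr x
  have h2 := eq_floor_thr y
  have hx0 := thr_pos x
  have hx1 := thr_le x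
  have hy0 := thr_pos y
  have hy1 := thr_le y
  have hf := Int.floor_le_floor h
  rcases (by omega : ⌊y⌋ = ⌊x⌋ ∨ ⌊y⌋ = ⌊x⌋ + 1 ∨ ⌊x⌋ + 2 ≤ ⌊y⌋) with e | e | e
  · have ht := thr_le_thr h e.symm
    have hs : {θ | roundUp x θ = roundUp y θ} = {θ | thr y ≤ θ ∧ θ < thr x}ᶜ := by
      ext θ
      simp only [Set.mem_ofPred_eq, roundUp_def, e, Set.mem_compl_iff, not_and, not_lt]
      split_ifs with a b b
      · simp [a]
      · exact absurd (ht.trans a) b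
      · simp [a, b]
      · simp [b]
    have hm : MeasurableSet {θ | thr y ≤ θ ∧ θ < thr x} := measurableSet_Ico
    rw [hs, probReal_compl_eq_one_sub hm, unif_Ico hy0 hx1, max_eq_left (by linarith)]
    rw [e] at h2
    rw [max_eq_left (by linarith)]
    linarith
  · have hs : {θ | roundUp x θ = roundUp y θ} = {θ | thr x ≤ θ ∧ θ < thr y} := by
      ext θ
      simp only [Set.mem_ofPred_eq, roundUp_def, e]
      split_ifs with a b b
      · simp [a, b]
      · simpa [a] using b
      · simp [a]
        omega
      · simp [a]
    rw [hs, unif_Ico hx0 hy1]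
    congr 1
    rw [e] at h2
    push_cast at h2
    linarith
  · have hs : {θ | roundUp x θ = roundUp y θ} = ∅ := by
      ext θ
      simp only [Set.mem_ofPred_eq, roundUp_def, Set.mem_empty_iff_false, iff_false]
      split_ifs <;> omega
    have e' : (⌊x⌋ : ℝ) + 2 ≤ ⌊y⌋ := by exact_mod_cast e
    rw [hs, max_eq_right (by linarith)]
    simp

/-! ### The description lies in the hull -/

/-- Integrality of `B` may be dropped if it increases by at least `1` along ties of `A`: rounding
all heights at a common level preserves such gaps. -/
lemma real_heights_mem {n : ℕ} (A : Fin n → ℤ) (B : Fin n → ℝ) (hA : ∀ j, 0 ≤ A j)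
    (hB : ∀ j, 0 ≤ B j)
    (hl : ∀ i : Fin n, ∀ h : (i : ℕ) + 1 < n, A i < A ⟨(i : ℕ) + 1, h⟩ ∨
      (A i = A ⟨(i : ℕ) + 1, h⟩ ∧ B i + 1 ≤ B ⟨(i : ℕ) + 1, h⟩)) :
    ((fun j => (A j : ℝ)), B) ∈ convexHull ℝ (lexPoints n) := by
  have := average_mem_convexHull (fun j => thr (B j))
    (fun s => ((fun j => (A j : ℝ)), (fun j => (roundBit (B j) (s j) : ℝ)))) (lexPoints n) ?_
  · convert this using 1
    ext j
    · simp
    · exact (integral_roundUp (B j)).symm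
  · intro θ
    refine ⟨A, fun j => roundUp (B j) θ, hA, fun j => roundUp_nonneg (hB j) θ, fun i h => ?_,
      rfl, rfl⟩
    rcases hl i h with h' | ⟨h1, h2⟩
    · exact Or.inl h'
    · refine Or.inr ⟨h1, ?_⟩
      have := roundUp_add_one_le h2 θ
      simp only
      omega

/-- The event that `a_j` is rounded to a smaller integer than every strictly larger `a_k`. -/
def sepEvent {n : ℕ} (a : Fin n → ℝ) (j : Fin n) : Set ℝ :=
  {θ | ∀ k, a j < a k → roundUp (a j) θ < roundUp (a k) θ}

lemma sepEvent_pos {n : ℕ} (a : Fin n → ℝ) (j : Fin n) : 0 < unif.real (sepEvent a j) := by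
  -- Just below the threshold of `a j`, every larger `a k` with the same floor has already jumped.
  obtain ⟨u, hu, hu'⟩ : ∃ u < thr (a j), 0 < u ∧ ∀ k, thr (a k) < thr (a j) → thr (a k) < u := by
    have h1 : ∀ᶠ u in nhdsWithin (thr (a j)) (Set.Iio (thr (a j))),
        0 < u ∧ ∀ k, thr (a k) < thr (a j) → thr (a k) < u := by
      refine Filter.Eventually.and ?_ (Filter.eventually_all.2 fun k => ?_)
      · exact nhdsWithin_le_nhds (lt_mem_nhds (thr_pos _))
      · by_cases hk : thr (a k) < thr (a j)
        · filter_upwards [nhdsWithin_le_nhds (lt_mem_nhds hk)] with u hu _ using hu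
        · exact Filter.Eventually.of_forall fun u h => absurd h hk
    obtain ⟨u, h, h'⟩ := (h1.and self_mem_nhdsWithin).exists
    exact ⟨u, h', h⟩
  have hsub : {θ | u ≤ θ ∧ θ < thr (a j)} ⊆ sepEvent a j := by
    rintro θ ⟨h1, h2⟩ k hk
    rw [roundUp_def, roundUp_def, if_neg (not_le.2 h2)]
    have hf := Int.floor_le_floor hk.le
    rcases hf.eq_or_lt with e | hf
    · have ht : thr (a k) < thr (a j) := by
        have e1 := eq_floor_thr (a j)
        have e2 := eq_floor_thr (a k)
        rw [e] at e1
        linarith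
      rw [if_pos ((hu'.2 k ht).le.trans h1)]
      omega
    · split_ifs <;> omega
  have := measureReal_mono (μ := unif) hsub
  rw [unif_Ico hu'.1 (thr_le _)] at this
  exact lt_of_lt_of_le (lt_max_of_lt_left (by linarith)) this

lemma mem_convexHull_of_hullDesc {n : ℕ} {p : (Fin n → ℝ) × (Fin n → ℝ)}
    (hp : p ∈ hullDesc n 1) : p ∈ convexHull ℝ (lexPoints n) := by
  classical
  obtain ⟨a, b⟩ := p
  obtain ⟨h0, hm, ht, hb⟩ := hp
  simp only at h0 hm ht hb
  have ha : ∀ j, 0 ≤ a j := fun j => (h0 j.pos).trans (hm (by rw [Fin.le_def]; simp))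
  set F : Fin n → ℝ := fun j => ∑ i ∈ univ.filter (fun i => i < j), max (1 - (a j - a i)) 0 with hF
  have hFb : ∀ j, 0 ≤ b j - F j := fun j => sub_nonneg.2 (hb j)
  have hfilter : ∀ (i : Fin n) (h : (i : ℕ) + 1 < n),
      univ.filter (fun k => k < (⟨(i : ℕ) + 1, h⟩ : Fin n))
        = insert i (univ.filter (fun k => k < i)) := by
    intro i h
    ext k
    simp only [Finset.mem_filter, Finset.mem_univ, true_and, Finset.mem_insert, Fin.lt_def,
      Fin.ext_iff]
    omega
  set c : Fin n → ℝ := fun j => (b j - F j) / unif.real (sepEvent a j) with hc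
  have hc0 : ∀ j, 0 ≤ c j := fun j => div_nonneg (hFb j) (sepEvent_pos a j).le
  -- The rounded first coordinates and the heights above them, as functions of the pattern.
  let A : (Fin n → Bool) → Fin n → ℤ := fun s j => roundBit (a j) (s j)
  let B : (Fin n → Bool) → Fin n → ℝ := fun s j =>
    (∑ i ∈ univ.filter (fun i => i < j), if A s i = A s j then (1 : ℝ) else 0) +
      if ∀ k, a j < a k → A s j < A s k then c j else 0
  have hAθ : ∀ θ j, A (pattern (fun j => thr (a j)) θ) j = roundUp (a j) θ := fun θ j => rfl
  have hev : ∀ P : (Fin n → Bool) → Prop,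
      MeasurableSet {θ | P (pattern (fun j => thr (a j)) θ)} := fun P =>
    measurable_pattern _ (MeasurableSet.of_discrete (s := {s | P s}))
  have key := average_mem_convexHull (fun j => thr (a j))
    (fun s => ((fun j => (A s j : ℝ)), B s)) (convexHull ℝ (lexPoints n)) ?_
  · rw [(convex_convexHull ℝ (lexPoints n)).convexHull_eq] at key
    convert key using 1
    ext j
    · exact (integral_roundUp (a j)).symm
    · simp only [B]
      rw [integral_add, integral_finsetSum]
      · have e1 : ∀ i ∈ univ.filter (fun i => i < j),
            ∫ θ, (if A (pattern (fun j => thr (a j)) θ) i = A (pattern (fun j => thr (a j)) θ) j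
              then (1 : ℝ) else 0) ∂unif = max (1 - (a j - a i)) 0 := by
          intro i hi
          rw [integral_boole _ (hev fun s => A s i = A s j), mul_one]
          exact unif_roundUp_eq (hm (Finset.mem_filter.1 hi).2.le)
        rw [Finset.sum_congr rfl e1,
          integral_boole _ (hev fun s => ∀ k, a j < a k → A s j < A s k)]
        change b j = F j + unif.real (sepEvent a j) * c j
        rw [hc]
        simp only
        rw [mul_div_cancel₀ _ (sepEvent_pos a j).ne']
        ring
      · exact fun i _ => integrable_comp_pattern (fun j => thr (a j))
          (fun s => if A s i = A s j then (1 : ℝ) else 0)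
      · exact integrable_comp_pattern (fun j => thr (a j))
          (fun s => ∑ i ∈ univ.filter (fun i => i < j), if A s i = A s j then (1 : ℝ) else 0)
      · exact integrable_comp_pattern (fun j => thr (a j))
          (fun s => if ∀ k, a j < a k → A s j < A s k then c j else 0)
  · intro θ
    set s := pattern (fun j => thr (a j)) θ with hs
    refine real_heights_mem (A s) (B s) (fun j => roundUp_nonneg (ha j) θ) (fun j => ?_)
      fun i h => ?_
    · refine add_nonneg (Finset.sum_nonneg fun i _ => ?_) ?_
      · split_ifs <;> norm_num
      · split_ifs
        · exact hc0 j
        · exact le_rfl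
    · have hle : i ≤ ⟨(i : ℕ) + 1, h⟩ := by rw [Fin.le_def]; simp
      have hAm : A s i ≤ A s ⟨(i : ℕ) + 1, h⟩ := roundUp_mono (hm hle) θ
      rcases hAm.lt_or_eq with hlt | heq
      · exact Or.inl hlt
      refine Or.inr ⟨heq, ?_⟩
      simp only [B]
      rw [hfilter i h, Finset.sum_insert (by simp), if_pos heq, ← heq]
      rcases (hm hle).eq_or_lt with e | hlt
      · have hFs : F ⟨(i : ℕ) + 1, h⟩ = 1 + F i := by
          simp only [hF]
          rw [hfilter i h, Finset.sum_insert (by simp), ← e]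
          simp
        have hE : sepEvent a ⟨(i : ℕ) + 1, h⟩ = sepEvent a i := by
          simp only [sepEvent, ← e]
        have hcc : c i ≤ c ⟨(i : ℕ) + 1, h⟩ := by
          simp only [hc, hE]
          have := ht i h e
          have := sepEvent_pos a i
          gcongr ?_ / _
          linarith
        rw [← e]
        split_ifs <;> linarith
      · rw [if_neg (fun H => absurd (H _ hlt) (by rw [heq]; exact lt_irrefl _))]
        have := hc0 ⟨(i : ℕ) + 1, h⟩
        split_ifs <;> linarith

lemma convexHull_lexPoints (n : ℕ) : convexHull ℝ (lexPoints n) = hullDesc n 1 :=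
  Set.Subset.antisymm (convexHull_min (lexPoints_subset n) (convex_hullDesc n))
    fun _ => mem_convexHull_of_hullDesc

lemma smul_hullDesc (n : ℕ) {r : ℝ} (hr : 0 < r) : r • hullDesc n 1 = hullDesc n r := by
  ext p
  rw [Set.mem_smul_set_iff_inv_smul_mem₀ hr.ne']
  constructor
  · intro h
    simpa [smul_smul, hr.ne'] using smul_mem_hullDesc hr h
  · intro h
    simpa [hr.ne'] using smul_mem_hullDesc (inv_pos.2 hr) h

end DilatedHull

/-- description of `r·P_n` from [Cavey]: the `r`-fold dilation of the
convex hull `P_n ⊆ ℝ^{2n}` of the integer vectors `(a_1,b_1,…,a_n,b_n) ∈ ℤ^{2n}_{≥0}` with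
`(a_1,b_1) < ⋯ < (a_n,b_n)` lexicographically is cut out by: `0 ≤ a_1 ≤ ⋯ ≤ a_n`; if
`a_j = a_{j+1}` then `b_{j+1} ≥ b_j + r`; and `b_j ≥ Σ_{i<j} max{r−(a_j−a_i),0}` for all `j`.
Here a point of `ℝ^{2n}` is a pair of functions `Fin n → ℝ` (the `a`- and `b`-coordinates). -/
theorem dilated_hull_eq (n : ℕ) (hn : 1 ≤ n) (r : ℕ) (hr : 1 ≤ r) :
    (r : ℝ) • convexHull ℝ
        {p : (Fin n → ℝ) × (Fin n → ℝ) |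
          ∃ A B : Fin n → ℤ,
            (∀ j, 0 ≤ A j) ∧ (∀ j, 0 ≤ B j) ∧
            (∀ i : Fin n, ∀ h : (i : ℕ) + 1 < n,
              A i < A ⟨(i : ℕ) + 1, h⟩ ∨
                (A i = A ⟨(i : ℕ) + 1, h⟩ ∧ B i < B ⟨(i : ℕ) + 1, h⟩)) ∧
            p.1 = (fun j => ((A j : ℤ) : ℝ)) ∧ p.2 = (fun j => ((B j : ℤ) : ℝ))} =
      {p : (Fin n → ℝ) × (Fin n → ℝ) |
        (∀ h : 0 < n, 0 ≤ p.1 ⟨0, h⟩) ∧ Monotone p.1 ∧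
        (∀ i : Fin n, ∀ h : (i : ℕ) + 1 < n,
          p.1 i = p.1 ⟨(i : ℕ) + 1, h⟩ → p.2 i + (r : ℝ) ≤ p.2 ⟨(i : ℕ) + 1, h⟩) ∧
        (∀ j : Fin n,
          (∑ i ∈ univ.filter (fun i => i < j), max ((r : ℝ) - (p.1 j - p.1 i)) 0) ≤ p.2 j)} := by
  change (r : ℝ) • convexHull ℝ (DilatedHull.lexPoints n) = DilatedHull.hullDesc n r
  rw [DilatedHull.convexHull_lexPoints, DilatedHull.smul_hullDesc n (by exact_mod_cast hr)]

end
end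

section
/- Let n ≥ 1 and r ≥ 1 be integers. A vector (a_1,b_1,…,a_n,b_n) ∈ ℤ^{2n} is r-lexicographically increasing in ℤ²_{≥0} if and only if there exist r vectors (a^{(1)},b^{(1)}),…,(a^{(r)},b^{(r)}) ∈ ℤ^{2n}_{≥0}, each of which is an n-tuple of pairwise distinct points of ℤ²_{≥0} listed in strictly increasing lexicographic order, such that a_j = Σ_{m=1}^{r} a^{(m)}_j and b_j = Σ_{m=1}^{r} b^{(m)}_j for every j = 1,…,n. -/
/-!
A strictly lexicographically increasing tuple `(A, B)` in `ℤ²_{≥0}` satisfies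
`B_j ≥ #{i < j : A_i = A_j}` (`ties_le`), and a family `A^{(m)}` of `r` monotone sequences with
sum `a` has at least `r - (a_j - a_i)` indices `m` with `A^{(m)}_i = A^{(m)}_j`. Summing over `m`
gives the lower bound on `b_j`, hence one direction.

Conversely, take the balanced splitting `A^{(m)}_j = ⌊(a_j + m) / r⌋`, `0 ≤ m < r`, which sums to
`a_j` by the Hermite identity (`sum_floor`). It has at most `max (r - (a_j - a_i)) 0` ties
between `i` and `j` (`sum_floor_ties_le`), so `e_j = b_j - ∑_m #{i < j : A^{(m)}_i = A^{(m)}_j}` is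
nonnegative. Let `B^{(m)}_j` be the number of ties, with the whole excess `e_j` added
for the unique `m` whose floor jumps from `a_j` to `a_j + 1`. The indicator of this
`m` is `⌊(a_j + 1 + m) / r⌋ - ⌊(a_j + m) / r⌋`. If `a_{j+1} > a_j`, that component increases
strictly in its first coordinate, so its excess is harmless; if `a_{j+1} = a_j`, the excess goes to
the same component and `e_{j+1} ≥ e_j`.
-/

open Finset

noncomputable section

/-- The number of indices `i < j` with `f i = f j`, as an integer. -/
def ties {n : ℕ} (f : Fin n → ℤ) (j : Fin n) : ℤ :=
  ∑ i ∈ univ.filter (fun i => i < j), if f i = f j then 1 else 0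

lemma ties_nonneg {n : ℕ} (f : Fin n → ℤ) (j : Fin n) : 0 ≤ ties f j :=
  Finset.sum_nonneg fun i _ => by split_ifs <;> simp

lemma ties_succ {n : ℕ} (f : Fin n → ℤ) (i : Fin n) (h : (i : ℕ) + 1 < n)
    (hf : f i = f ⟨(i : ℕ) + 1, h⟩) : ties f ⟨(i : ℕ) + 1, h⟩ = ties f i + 1 := by
  have hset : univ.filter (fun k : Fin n => k < ⟨(i : ℕ) + 1, h⟩)
      = insert i (univ.filter (fun k => k < i)) := by
    ext k
    simp only [mem_filter, mem_univ, true_and, mem_insert, Fin.lt_def, Fin.ext_iff]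
    omega
  unfold ties
  rw [hset, Finset.sum_insert (by simp), ← hf]
  simp [add_comm]

lemma monotone_of_step {n : ℕ} (f : Fin n → ℤ)
    (hf : ∀ i : Fin n, ∀ h : (i : ℕ) + 1 < n, f i ≤ f ⟨(i : ℕ) + 1, h⟩) : Monotone f := by
  have key : ∀ k : ℕ, ∀ hk : k < n, ∀ i : Fin n, (i : ℕ) ≤ k → f i ≤ f ⟨k, hk⟩ := by
    intro k
    induction k with
    | zero =>
      intro hk i hi
      exact le_of_eq (congrArg f (Fin.ext (by simpa using hi)))
    | succ k ih =>
      intro hk i hi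
      rcases Nat.lt_or_eq_of_le hi with h | h
      · exact (ih (by omega) i (by omega)).trans (hf ⟨k, by omega⟩ hk)
      · exact le_of_eq (congrArg f (Fin.ext h))
  intro i j hij
  exact key j j.2 i hij

/-- In a strictly lexicographically increasing tuple the second coordinates increase strictly along
each block of equal first coordinates, and start at a nonnegative value. -/
lemma ties_le {n : ℕ} (A B : Fin n → ℤ) (hB : ∀ j, 0 ≤ B j)
    (hs : ∀ i : Fin n, ∀ h : (i : ℕ) + 1 < n, A i < A ⟨(i : ℕ) + 1, h⟩ ∨
      (A i = A ⟨(i : ℕ) + 1, h⟩ ∧ B i < B ⟨(i : ℕ) + 1, h⟩)) (j : Fin n) :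
    ties A j ≤ B j := by
  have hmono : Monotone A := monotone_of_step A fun i h => by
    rcases hs i h with h1 | h1
    · exact h1.le
    · exact h1.1.le
  have key : ∀ k : ℕ, ∀ hk : k < n, ties A ⟨k, hk⟩ ≤ B ⟨k, hk⟩ := by
    intro k
    induction k with
    | zero =>
      intro hk
      have : ties A ⟨0, hk⟩ = 0 := by
        unfold ties
        apply Finset.sum_eq_zero
        intro i hi
        simp [Fin.lt_def] at hi
      rw [this]
      exact hB _
    | succ k ih =>
      intro hk
      rcases hs ⟨k, by omega⟩ hk with h1 | ⟨h1, h2⟩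
      · have : ties A ⟨k + 1, hk⟩ = 0 := by
          unfold ties
          apply Finset.sum_eq_zero
          intro i hi
          simp only [mem_filter, mem_univ, true_and, Fin.lt_def] at hi
          have : A i ≤ A ⟨k, by omega⟩ := hmono (Fin.le_def.2 (by simp; omega))
          rw [if_neg]
          exact (this.trans_lt h1).ne
        rw [this]
        exact hB _
      · have h3 := ties_succ A ⟨k, by omega⟩ hk h1
        have h4 := ih (by omega)
        simp only at h2 h3
        omega
  exact key j j.2

/-- The Hermite identity `∑_{m < r} ⌊(x + m) / r⌋ = x` for integral `x`. -/
lemma sum_floor (r : ℕ) (hr : 1 ≤ r) (x : ℤ) :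
    ∑ m : Fin r, (x + (m : ℕ)) / (r : ℤ) = x := by
  have hr0 : (r : ℤ) ≠ 0 := by omega
  -- Replacing `x` by `x + 1` shifts the summation window, so the sum telescopes.
  have step : ∀ x : ℤ, ∑ m : Fin r, (x + 1 + (m : ℕ)) / (r : ℤ)
      = ∑ m : Fin r, (x + (m : ℕ)) / (r : ℤ) + 1 := by
    intro x
    have h := Finset.sum_range_sub (fun m : ℕ => (x + (m : ℤ)) / (r : ℤ)) r
    rw [Finset.sum_sub_distrib] at h
    rw [Fin.sum_univ_eq_sum_range (fun m : ℕ => (x + 1 + (m : ℤ)) / (r : ℤ)),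
      Fin.sum_univ_eq_sum_range (fun m : ℕ => (x + (m : ℤ)) / (r : ℤ))]
    have h2 : (x + (r : ℤ)) / (r : ℤ) = x / r + 1 := by
      rw [Int.add_ediv_of_dvd_right (dvd_refl _), Int.ediv_self hr0]
    have h3 : ∀ m : ℕ, x + ((m + 1 : ℕ) : ℤ) = x + 1 + m := by intro m; push_cast; ring
    simp only [h3, h2, Nat.cast_zero, add_zero] at h
    linarith
  induction x using Int.induction_on with
  | zero =>
    apply Finset.sum_eq_zero
    intro m _
    have := m.2
    exact Int.ediv_eq_zero_of_lt (by omega) (by omega)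
  | succ i ih => rw [step, ih]
  | pred i ih =>
    have := step (-(i : ℤ) - 1)
    rw [sub_add_cancel, ih] at this
    linarith

/-- The floors of `(x + m) / r` and `(y + m) / r` agree for at most `max (r - (y - x)) 0` of the
shifts `0 ≤ m < r`: never when `y - x ≥ r`, and otherwise the second floor exceeds the first by at
most `1`, so that the indicator of a tie is at most `1` minus their difference. -/
lemma sum_floor_ties_le (r : ℕ) (hr : 1 ≤ r) (x y : ℤ) :
    ∑ m : Fin r, (if (x + (m : ℕ)) / (r : ℤ) = (y + (m : ℕ)) / (r : ℤ) then (1 : ℤ) else 0)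
      ≤ max (r - (y - x)) 0 := by
  have hr0 : (0 : ℤ) < r := by omega
  have hshift : ∀ m : ℤ, (x + m + r) / (r : ℤ) = (x + m) / r + 1 := fun m => by
    rw [Int.add_ediv_of_dvd_right (dvd_refl _), Int.ediv_self hr0.ne']
  rcases le_or_gt (r : ℤ) (y - x) with h | h
  · apply le_max_of_le_right
    apply Finset.sum_nonpos
    intro m _
    rw [if_neg]
    have h1 : (x + (m : ℕ) + r) / (r : ℤ) ≤ (y + (m : ℕ)) / r :=
      Int.ediv_le_ediv hr0 (by linarith)
    rw [hshift] at h1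
    omega
  · apply le_max_of_le_left
    have hsum : ∑ m : Fin r, (1 - ((y + (m : ℕ)) / (r : ℤ) - (x + (m : ℕ)) / (r : ℤ)))
        = r - (y - x) := by
      rw [Finset.sum_sub_distrib, Finset.sum_sub_distrib, sum_floor r hr, sum_floor r hr]
      simp
    rw [← hsum]
    apply Finset.sum_le_sum
    intro m _
    have h1 : (y + (m : ℕ)) / (r : ℤ) ≤ (x + (m : ℕ) + r) / r :=
      Int.ediv_le_ediv hr0 (by linarith)
    rw [hshift] at h1
    split_ifs <;> omega

/-- a vector of `ℤ^{2n}` is `r`-lexicographically increasing in `ℤ²_{≥0}`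
iff it is the coordinate-wise sum of `r` `n`-tuples of points of `ℤ²_{≥0}`, each listed in
strictly increasing lexicographic order (in particular with pairwise distinct points). -/
theorem rlex_iff_sum_of_strict (n : ℕ) (hn : 1 ≤ n) (r : ℕ) (hr : 1 ≤ r)
    (a b : Fin n → ℤ) :
    RLexNN n (r : ℤ) a b ↔
      ∃ A B : Fin r → Fin n → ℤ,
        (∀ m j, 0 ≤ A m j) ∧ (∀ m j, 0 ≤ B m j) ∧
        (∀ m : Fin r, ∀ i : Fin n, ∀ h : (i : ℕ) + 1 < n,
          A m i < A m ⟨(i : ℕ) + 1, h⟩ ∨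
            (A m i = A m ⟨(i : ℕ) + 1, h⟩ ∧ B m i < B m ⟨(i : ℕ) + 1, h⟩)) ∧
        (∀ j, a j = ∑ m : Fin r, A m j) ∧ (∀ j, b j = ∑ m : Fin r, B m j) := by
  have hr0 : (0 : ℤ) < r := by omega
  constructor
  · rintro ⟨h0, hmono, hstep, hbound⟩
    have hnn : ∀ j, 0 ≤ a j := fun j => (h0 hn).trans (hmono (Fin.le_def.2 (Nat.zero_le _)))
    set A : Fin r → Fin n → ℤ := fun m j => (a j + (m : ℕ)) / (r : ℤ) with hA
    -- `D m j` is the indicator that the floor for `m` jumps between `a j` and `a j + 1`.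
    set D : Fin r → Fin n → ℤ :=
      fun m j => (a j + 1 + (m : ℕ)) / (r : ℤ) - (a j + (m : ℕ)) / (r : ℤ) with hD
    set e : Fin n → ℤ := fun j => b j - ∑ m, ties (A m) j with he
    have hDnn : ∀ m j, 0 ≤ D m j := fun m j =>
      sub_nonneg.2 (Int.ediv_le_ediv hr0 (by linarith))
    have hDsum : ∀ j, ∑ m, D m j = 1 := by
      intro j
      simp only [hD]
      rw [Finset.sum_sub_distrib, sum_floor r hr, sum_floor r hr]
      ring
    have henn : ∀ j, 0 ≤ e j := by
      intro j
      refine sub_nonneg.2 (le_trans ?_ (hbound j))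
      unfold ties
      rw [Finset.sum_comm]
      exact Finset.sum_le_sum fun i _ => sum_floor_ties_le r hr (a i) (a j)
    refine ⟨A, fun m j => ties (A m) j + e j * D m j, ?_, ?_, ?_, ?_, ?_⟩
    · intro m j
      have := hnn j
      exact Int.ediv_nonneg (by omega) hr0.le
    · intro m j
      exact add_nonneg (ties_nonneg _ _) (mul_nonneg (henn j) (hDnn m j))
    · intro m i h
      have hai : a i ≤ a ⟨(i : ℕ) + 1, h⟩ := hmono (Fin.le_def.2 (Nat.le_succ _))
      have hAi : A m i ≤ A m ⟨(i : ℕ) + 1, h⟩ := Int.ediv_le_ediv hr0 (by linarith)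
      rcases hAi.lt_or_eq with hlt | heq
      · exact Or.inl hlt
      refine Or.inr ⟨heq, ?_⟩
      have ht := ties_succ (A m) i h heq
      rcases hai.lt_or_eq with halt | haeq
      · -- `a` jumps but the floor for `m` does not, so `m` carries no excess at `i`.
        have hD0 : D m i = 0 := by
          have h1 : (a i + 1 + (m : ℕ)) / (r : ℤ) ≤ A m ⟨(i : ℕ) + 1, h⟩ :=
            Int.ediv_le_ediv hr0 (by linarith)
          have h2 := hDnn m i
          simp only [hD, hA] at h1 h2 heq ⊢
          omega
        have h3 := mul_nonneg (henn ⟨(i : ℕ) + 1, h⟩) (hDnn m ⟨(i : ℕ) + 1, h⟩)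
        simp only [hD0, mul_zero, ht]
        linarith
      · have hDeq : D m ⟨(i : ℕ) + 1, h⟩ = D m i := by simp only [hD, haeq]
        have hee : e i ≤ e ⟨(i : ℕ) + 1, h⟩ := by
          have hsum : ∑ k, ties (A k) ⟨(i : ℕ) + 1, h⟩ = ∑ k, ties (A k) i + r := by
            rw [Finset.sum_congr rfl fun k _ => ties_succ (A k) i h (by simp only [hA, haeq]),
              Finset.sum_add_distrib]
            simp
          have := hstep i h haeq
          simp only [he, hsum]
          linarith
        have := mul_le_mul_of_nonneg_right hee (hDnn m i)
        simp only [hDeq, ht]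
        linarith
    · intro j
      exact (sum_floor r hr (a j)).symm
    · intro j
      rw [Finset.sum_add_distrib, ← Finset.mul_sum, hDsum]
      simp only [he]
      ring
  · rintro ⟨A, B, hA, hB, hs, ha, hb⟩
    have hle : ∀ m, ∀ i : Fin n, ∀ h : (i : ℕ) + 1 < n, A m i ≤ A m ⟨(i : ℕ) + 1, h⟩ := by
      intro m i h
      rcases hs m i h with h1 | h1
      · exact h1.le
      · exact h1.1.le
    have hmono : ∀ m, Monotone (A m) := fun m => monotone_of_step _ (hle m)
    refine ⟨fun h => ?_, fun i j hij => ?_, fun i h hai => ?_, fun j => ?_⟩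
    · rw [ha]
      exact Finset.sum_nonneg fun m _ => hA m _
    · rw [ha, ha]
      exact Finset.sum_le_sum fun m _ => hmono m hij
    · rw [ha, ha] at hai
      have heq := (Finset.sum_eq_sum_iff_of_le fun m _ => hle m i h).1 hai
      have : ∑ m : Fin r, (B m i + 1) ≤ ∑ m : Fin r, B m ⟨(i : ℕ) + 1, h⟩ := by
        apply Finset.sum_le_sum
        intro m hm
        rcases hs m i h with h1 | h1
        · exact absurd (heq m hm) h1.ne
        · exact h1.2
      rw [Finset.sum_add_distrib] at this
      rw [hb, hb]
      simpa using this
    · have h1 : ∑ m, ties (A m) j ≤ b j := by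
        rw [hb]
        exact Finset.sum_le_sum fun m _ => ties_le (A m) (B m) (hB m) (hs m) j
      refine le_trans ?_ h1
      unfold ties
      rw [Finset.sum_comm]
      apply Finset.sum_le_sum
      intro i hi
      have hij : i ≤ j := (by simpa using hi : i < j).le
      refine max_le ?_ (Finset.sum_nonneg fun m _ => by split_ifs <;> simp)
      have hsum : ∑ m : Fin r, (1 - (A m j - A m i)) = r - (a j - a i) := by
        rw [Finset.sum_sub_distrib, Finset.sum_sub_distrib, ← ha, ← ha]
        simp
      rw [← hsum]
      apply Finset.sum_le_sum
      intro m _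
      have := hmono m hij
      split_ifs <;> omega

end
end

section
/- Fix integers n ≥ 1, s ≥ 0, d_1, d_2, r ≥ 1 and δ ∈ {0,1,…,r}^{n−1}, with blocks, columns, block-start indices I = {i_1 < ⋯ < i_ℓ}, and statistics L_C, R_C as defined below. Then a vector (a_1,b_1,…,a_n,b_n) ∈ ℤ^{2n} is an r-lexicographically increasing n-tuple in P_L of type δ if and only if it satisfies: (1) 0 ≤ a_{i_1}; a_{i_k} + (δ_{i_k}+⋯+δ_{i_{k+1}−1}) ≤ a_{i_{k+1}} for each k = 1,…,ℓ−1; and a_{i_ℓ} + (δ_{i_ℓ}+⋯+δ_{n−1}) ≤ d_1; (2) for each j ∉ I, a_j = a_i + (δ_i+⋯+δ_{j−1}) where i is the largest element of I with i < j; (3) for each column C = {j, j+1, …, j'}: L_C ≤ b_j; b_k + r ≤ b_{k+1} for each k = j,…,j'−1; and b_{j'} ≤ d_2 + s·a_j − R_C. -/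
/-!
Writing `p` for the partial sums of `δ`, both sides are compared through one condition on consecutive
first coordinates (`StepCond`): `δ_m ≤ a_{m+1} - a_m`, with equality when `δ_m < r`. This is the
definition of type `δ` with the minimum spelled out (`hasType_iff`). It also follows from the block
conditions: the last block start at or before `m` determines `a_m`, and then the equation for `a_{m+1}`
(if `δ_m < r`) or the inequality at the next block start (if `δ_m = r`) is the step at `m`
(`StepCond.of_blocks`).

Under the step condition, for `i ≤ j` either `a_j - a_i = p_j - p_i` or both differences are at least
`r` (`StepCond.diff`). Hence the truncated sums bounding `b_j` equal the statistics `Lstat` and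
`Rstat`. These change by exactly `r` along a column (`Lstat_succ`, `Rstat_succ`), so
bounds at the two ends of a column, together with `b_k + r ≤ b_{k+1}`, give the bounds at every
index of the column.
-/

open Finset

noncomputable section

/-- Partial sums `δ_1 + ⋯ + δ_{j-1}` of the type vector `δ`. -/
def pSum (n r : ℕ) (δ : Fin (n - 1) → Fin (r + 1)) (j : Fin n) : ℤ :=
  ∑ i ∈ univ.filter (fun i : Fin (n - 1) => (i : ℕ) < (j : ℕ)), ((δ i : ℕ) : ℤ)

/-- `|δ| = δ_1 + ⋯ + δ_{n-1}`. -/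
def delTotal (n r : ℕ) (δ : Fin (n - 1) → Fin (r + 1)) : ℤ := ∑ i, ((δ i : ℕ) : ℤ)

/-- `ℓ(δ) = 1 + #{i | δ_i = r}`, the number of blocks. -/
def ellStat (n r : ℕ) (δ : Fin (n - 1) → Fin (r + 1)) : ℕ :=
  1 + (univ.filter (fun i : Fin (n - 1) => (δ i : ℕ) = r)).card

/-- The set of distinct values `a_1 < ⋯ < a_{c(δ)}` appearing in the list
`0, δ_1, δ_1+δ_2, …, δ_1+⋯+δ_{n-1}`. -/
def distinctVals (n r : ℕ) (δ : Fin (n - 1) → Fin (r + 1)) : Finset ℤ :=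
  univ.image (pSum n r δ)

/-- `n_k(δ)`: the number of occurrences of the value `v = a_k` in the above list. -/
def nOcc (n r : ℕ) (δ : Fin (n - 1) → Fin (r + 1)) (v : ℤ) : ℕ :=
  (univ.filter (fun j : Fin n => pSum n r δ j = v)).card

/-- `j` is the first index of its block: `j = 1` or `δ_{j-1} = r`. -/
def blockStart (n r : ℕ) (δ : Fin (n - 1) → Fin (r + 1)) (j : Fin n) : Prop :=
  ∀ hj : 0 < (j : ℕ), ((δ ⟨(j : ℕ) - 1, by have := j.isLt; omega⟩ : ℕ)) = r

/-- `j` is the first index of its column: `j = 1` or `δ_{j-1} ≠ 0`. -/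
def colStart (n r : ℕ) (δ : Fin (n - 1) → Fin (r + 1)) (j : Fin n) : Prop :=
  ∀ hj : 0 < (j : ℕ), ((δ ⟨(j : ℕ) - 1, by have := j.isLt; omega⟩ : ℕ)) ≠ 0

/-- The indices `{j, j+1, …, j'}` form a column of `δ`. -/
def IsColumn (n r : ℕ) (δ : Fin (n - 1) → Fin (r + 1)) (j j' : Fin n) : Prop :=
  j ≤ j' ∧ colStart n r δ j ∧
  (∀ k : Fin n, j ≤ k → k < j' → ∀ h : (k : ℕ) < n - 1, ((δ ⟨(k : ℕ), h⟩ : ℕ)) = 0) ∧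
  (∀ h : (j' : ℕ) < n - 1, ((δ ⟨(j' : ℕ), h⟩ : ℕ)) ≠ 0)

/-- `L_C = Σ_{i=1}^{j-1} max{r − (δ_i + ⋯ + δ_{j−1}), 0}` for the column with first
index `j`. -/
def Lstat (n r : ℕ) (δ : Fin (n - 1) → Fin (r + 1)) (j : Fin n) : ℤ :=
  ∑ i ∈ univ.filter (fun i : Fin n => i < j),
    max ((r : ℤ) - (pSum n r δ j - pSum n r δ i)) 0

/-- `R_C = Σ_{k=j'+1}^{n} max{r − (δ_{j'} + ⋯ + δ_{k−1}), 0}` for the column with last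
index `j'`. -/
def Rstat (n r : ℕ) (δ : Fin (n - 1) → Fin (r + 1)) (j' : Fin n) : ℤ :=
  ∑ k ∈ univ.filter (fun k : Fin n => j' < k),
    max ((r : ℤ) - (pSum n r δ k - pSum n r δ j')) 0

/-- An `r`-lexicographically increasing `n`-tuple of integer points in the trapezoid
`P_L = {(x,y) | 0 ≤ x ≤ d1, 0 ≤ y ≤ d2 + s*x}`: the points are `(a j, b j)` for `j : Fin n`. -/
def RLexIncIn (n : ℕ) (s d1 d2 r : ℤ) (a b : Fin n → ℤ) : Prop :=
  Monotone a ∧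
  (∀ i : Fin n, ∀ h : (i : ℕ) + 1 < n,
      a i = a ⟨(i : ℕ) + 1, h⟩ → b i + r ≤ b ⟨(i : ℕ) + 1, h⟩) ∧
  (∀ h : 0 < n, 0 ≤ a ⟨0, h⟩) ∧
  (∀ h : 0 < n, a ⟨n - 1, by omega⟩ ≤ d1) ∧
  (∀ j : Fin n,
    (∑ i ∈ univ.filter (fun i => i < j), max (r - (a j - a i)) 0) ≤ b j ∧
    b j ≤ d2 + s * a j - ∑ k ∈ univ.filter (fun k => j < k), max (r - (a k - a j)) 0)

/-- The tuple `(a, b)` has type `δ`, i.e. `δ_i = min{a_{i+1} − a_i, r}`. -/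
def HasType (n r : ℕ) (δ : Fin (n - 1) → Fin (r + 1)) (a : Fin n → ℤ) : Prop :=
  ∀ i : Fin (n - 1),
    ((δ i : ℕ) : ℤ) =
      min (a ⟨(i : ℕ) + 1, by have := i.isLt; omega⟩ - a ⟨(i : ℕ), by have := i.isLt; omega⟩)
        (r : ℤ)

/-- The conditions of Lemma 4.1 of the paper defining `P^δ`:
(1) the inequalities on the positions `a_{i_k}` of the block starts;
(2) the equations for `a_j`, `j ∉ I` (`i` being the largest element of `I` below `j`);
(3) for every column `C = {j,…,j'}`: `L_C ≤ b_j`, `b_k + r ≤ b_{k+1}`, and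
`b_{j'} ≤ d_2 + s·a_j − R_C`. -/
def PdeltaCond (n r : ℕ) (s d1 d2 : ℤ) (δ : Fin (n - 1) → Fin (r + 1))
    (a b : Fin n → ℤ) : Prop :=
  (∀ h : 0 < n, 0 ≤ a ⟨0, h⟩) ∧
  (∀ p p' : Fin n, blockStart n r δ p → blockStart n r δ p' → p < p' →
      (∀ q : Fin n, p < q → q < p' → ¬ blockStart n r δ q) →
      a p + (pSum n r δ p' - pSum n r δ p) ≤ a p') ∧
  (∀ p : Fin n, blockStart n r δ p → (∀ q : Fin n, p < q → ¬ blockStart n r δ q) →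
      a p + (delTotal n r δ - pSum n r δ p) ≤ d1) ∧
  (∀ j : Fin n, ¬ blockStart n r δ j →
      ∀ i : Fin n, blockStart n r δ i → i < j →
        (∀ q : Fin n, blockStart n r δ q → q < j → q ≤ i) →
        a j = a i + (pSum n r δ j - pSum n r δ i)) ∧
  (∀ j j' : Fin n, IsColumn n r δ j j' →
      (Lstat n r δ j ≤ b j ∧
       (∀ k : Fin n, j ≤ k → k < j' → ∀ h : (k : ℕ) + 1 < n, b k + (r : ℤ) ≤ b ⟨(k : ℕ) + 1, h⟩) ∧
       b j' ≤ d2 + s * a j - Rstat n r δ j'))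

section

variable {n r : ℕ} {δ : Fin (n - 1) → Fin (r + 1)} {a b : Fin n → ℤ}

/-! ### Partial sums and the statistics of a column -/

lemma pSum_succ (δ : Fin (n - 1) → Fin (r + 1)) (m : ℕ) (h : m + 1 < n) :
    pSum n r δ ⟨m + 1, h⟩ = pSum n r δ ⟨m, by omega⟩ + ((δ ⟨m, by omega⟩ : ℕ) : ℤ) := by
  unfold pSum
  have : univ.filter (fun i : Fin (n - 1) => (i : ℕ) < m + 1) =
      insert ⟨m, by omega⟩ (univ.filter (fun i : Fin (n - 1) => (i : ℕ) < m)) := by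
    ext i
    simp only [mem_filter, mem_univ, true_and, mem_insert, Fin.ext_iff]
    omega
  simp only [this]
  rw [sum_insert (by simp)]
  ring

lemma pSum_last (δ : Fin (n - 1) → Fin (r + 1)) (h : n - 1 < n) :
    pSum n r δ ⟨n - 1, h⟩ = delTotal n r δ := by
  unfold pSum delTotal
  congr 1
  ext i
  simp

lemma Lstat_succ (m : ℕ) (h : m + 1 < n) (h0 : (δ ⟨m, by omega⟩ : ℕ) = 0) :
    Lstat n r δ ⟨m + 1, h⟩ = Lstat n r δ ⟨m, by omega⟩ + r := by
  unfold Lstat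
  have hp := pSum_succ δ m h
  rw [h0] at hp
  have : univ.filter (fun i : Fin n => i < ⟨m + 1, h⟩) =
      insert ⟨m, by omega⟩ (univ.filter (fun i : Fin n => i < ⟨m, by omega⟩)) := by
    ext i
    simp only [mem_filter, mem_univ, true_and, mem_insert, Fin.ext_iff, Fin.lt_def]
    omega
  rw [this, sum_insert (by simp), hp]
  simp
  ring

lemma Rstat_succ (m : ℕ) (h : m + 1 < n) (h0 : (δ ⟨m, by omega⟩ : ℕ) = 0) :
    Rstat n r δ ⟨m, by omega⟩ = Rstat n r δ ⟨m + 1, h⟩ + r := by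
  unfold Rstat
  have hp := pSum_succ δ m h
  rw [h0] at hp
  have : univ.filter (fun i : Fin n => (⟨m, by omega⟩ : Fin n) < i) =
      insert ⟨m + 1, h⟩ (univ.filter (fun i : Fin n => ⟨m + 1, h⟩ < i)) := by
    ext i
    simp only [mem_filter, mem_univ, true_and, mem_insert, Fin.ext_iff, Fin.lt_def]
    omega
  rw [this, sum_insert (by simp), hp]
  simp
  ring

/-! ### The step condition -/

/-- The condition on consecutive first coordinates equivalent to `a` having type `δ`: each gap is
at least `δ_m`, and exactly `δ_m` when `δ_m < r`. -/
def StepCond (n r : ℕ) (δ : Fin (n - 1) → Fin (r + 1)) (a : Fin n → ℤ) : Prop :=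
  ∀ (m : ℕ) (h : m + 1 < n),
    ((δ ⟨m, by omega⟩ : ℕ) : ℤ) ≤ a ⟨m + 1, h⟩ - a ⟨m, by omega⟩ ∧
    ((δ ⟨m, by omega⟩ : ℕ) < r → ((δ ⟨m, by omega⟩ : ℕ) : ℤ) = a ⟨m + 1, h⟩ - a ⟨m, by omega⟩)

lemma hasType_iff : HasType n r δ a ↔ StepCond n r δ a := by
  constructor
  · intro H m h
    have := H ⟨m, by omega⟩
    simp only at this
    omega
  · rintro H ⟨m, hm⟩
    have := H m (by omega)
    have h2 := (δ ⟨m, hm⟩).isLt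
    simp only
    omega

/-- Differences of `a` dominate those of the partial sums, and agree with them unless the latter have
already reached the truncation level `r`. -/
lemma StepCond.diff (H : StepCond n r δ a) (i j : Fin n) (hij : i ≤ j) :
    0 ≤ pSum n r δ j - pSum n r δ i ∧ pSum n r δ j - pSum n r δ i ≤ a j - a i ∧
    (a j - a i = pSum n r δ j - pSum n r δ i ∨ (r : ℤ) ≤ pSum n r δ j - pSum n r δ i) := by
  obtain ⟨i, hi⟩ := i
  obtain ⟨j, hj⟩ := j
  replace hij : i ≤ j := hij
  induction j, hij using Nat.le_induction with
  | base => simp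
  | succ j hij ih =>
    have ih := ih (by omega)
    have h1 := H j hj
    have h2 := pSum_succ δ j hj
    have h3 := (δ ⟨j, by omega⟩).isLt
    omega

/-- Within a block, positions are determined exactly by the partial sums. -/
lemma StepCond.diff_eq (H : StepCond n r δ a) (i j : Fin n) (hij : i ≤ j)
    (hb : ∀ q : Fin n, i < q → q ≤ j → ¬ blockStart n r δ q) :
    a j = a i + (pSum n r δ j - pSum n r δ i) := by
  obtain ⟨i, hi⟩ := i
  obtain ⟨j, hj⟩ := j
  replace hij : i ≤ j := hij
  induction j, hij using Nat.le_induction with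
  | base => simp
  | succ j hij ih =>
    have ih := ih (by omega) (fun q h1 h2 => hb q h1 (by simp only [Fin.le_def] at *; omega))
    have h1 := H j hj
    have h2 := pSum_succ δ j hj
    have h3 := (δ ⟨j, by omega⟩).isLt
    have h5 : (δ ⟨j, by omega⟩ : ℕ) ≠ r := fun h =>
      hb ⟨j + 1, hj⟩ (by simp only [Fin.lt_def]; omega) le_rfl (fun _ => h)
    omega

lemma StepCond.monotone (H : StepCond n r δ a) : Monotone a := by
  intro i j hij
  have := H.diff i j hij
  omega

lemma StepCond.max_eq (H : StepCond n r δ a) (i j : Fin n) (hij : i ≤ j) :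
    max ((r : ℤ) - (a j - a i)) 0 = max ((r : ℤ) - (pSum n r δ j - pSum n r δ i)) 0 := by
  have := H.diff i j hij
  omega

lemma StepCond.left_sum (H : StepCond n r δ a) (j : Fin n) :
    ∑ i ∈ univ.filter (fun i => i < j), max ((r : ℤ) - (a j - a i)) 0 = Lstat n r δ j :=
  sum_congr rfl fun i hi => H.max_eq i j (mem_filter.1 hi).2.le

lemma StepCond.right_sum (H : StepCond n r δ a) (j : Fin n) :
    ∑ k ∈ univ.filter (fun k => j < k), max ((r : ℤ) - (a k - a j)) 0 = Rstat n r δ j :=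
  sum_congr rfl fun k hk => H.max_eq j k (mem_filter.1 hk).2.le

/-! ### Existence of blocks and columns -/

lemma exists_blockStart (δ : Fin (n - 1) → Fin (r + 1)) (m : ℕ) (hm : m < n) :
    ∃ p : Fin n, p ≤ ⟨m, hm⟩ ∧ blockStart n r δ p ∧
      ∀ q : Fin n, p < q → q ≤ ⟨m, hm⟩ → ¬ blockStart n r δ q := by
  induction m with
  | zero =>
    refine ⟨⟨0, hm⟩, le_rfl, fun h => absurd h (by simp), fun q h1 h2 => ?_⟩
    exact absurd (h1.trans_le h2) (lt_irrefl _)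
  | succ m ih =>
    by_cases hb : blockStart n r δ ⟨m + 1, hm⟩
    · exact ⟨_, le_rfl, hb, fun q h1 h2 => absurd (h1.trans_le h2) (lt_irrefl _)⟩
    · obtain ⟨p, h1, h2, h3⟩ := ih (by omega)
      refine ⟨p, ?_, h2, fun q hq hq' => ?_⟩
      · simp only [Fin.le_def] at *
        omega
      · by_cases he : q = ⟨m + 1, hm⟩
        · exact he ▸ hb
        · refine h3 q hq ?_
          simp only [Fin.le_def, Fin.ext_iff] at *
          omega

lemma exists_colStart (δ : Fin (n - 1) → Fin (r + 1)) (m : ℕ) (hm : m < n) :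
    ∃ j : Fin n, j ≤ ⟨m, hm⟩ ∧ colStart n r δ j ∧
      ∀ k : Fin n, j ≤ k → k < ⟨m, hm⟩ → ∀ h : (k : ℕ) < n - 1, (δ ⟨(k : ℕ), h⟩ : ℕ) = 0 := by
  induction m with
  | zero =>
    refine ⟨⟨0, hm⟩, le_rfl, fun h => absurd h (by simp), fun k _ h2 => ?_⟩
    exact absurd h2 (by simp [Fin.lt_def])
  | succ m ih =>
    by_cases h0 : (δ ⟨m, by omega⟩ : ℕ) = 0
    · obtain ⟨j, h1, h2, h3⟩ := ih (by omega)
      refine ⟨j, ?_, h2, fun k hk hk' h => ?_⟩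
      · simp only [Fin.le_def] at *
        omega
      · by_cases he : (k : ℕ) = m
        · simpa only [he] using h0
        · refine h3 k hk ?_ h
          simp only [Fin.lt_def] at *
          omega
    · exact ⟨_, le_rfl, fun _ => h0, fun k h1 h2 => absurd (h1.trans_lt h2) (lt_irrefl _)⟩

lemma exists_colEnd (δ : Fin (n - 1) → Fin (r + 1)) (m : ℕ) (hm : m < n) :
    ∃ j' : Fin n, ⟨m, hm⟩ ≤ j' ∧
      (∀ k : Fin n, ⟨m, hm⟩ ≤ k → k < j' → ∀ h : (k : ℕ) < n - 1, (δ ⟨(k : ℕ), h⟩ : ℕ) = 0) ∧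
      ∀ h : (j' : ℕ) < n - 1, (δ ⟨(j' : ℕ), h⟩ : ℕ) ≠ 0 := by
  obtain ⟨t, ht⟩ : ∃ t, m + t + 1 = n := ⟨n - 1 - m, by omega⟩
  induction t generalizing m with
  | zero =>
    refine ⟨⟨m, hm⟩, le_rfl, fun k h1 h2 => absurd (h1.trans_lt h2) (lt_irrefl _), fun h => ?_⟩
    simp only at h
    omega
  | succ t ih =>
    by_cases h0 : (δ ⟨m, by omega⟩ : ℕ) = 0
    · obtain ⟨j', h1, h2, h3⟩ := ih (m + 1) (by omega) (by omega)
      refine ⟨j', ?_, fun k hk hk' h => ?_, h3⟩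
      · simp only [Fin.le_def] at *
        omega
      · by_cases he : (k : ℕ) = m
        · simpa only [he] using h0
        · refine h2 k ?_ hk' h
          simp only [Fin.le_def] at *
          omega
    · exact ⟨_, le_rfl, fun k h1 h2 => absurd (h1.trans_lt h2) (lt_irrefl _), fun _ => h0⟩

/-! ### From block and column conditions to conditions at each index -/

lemma StepCond.of_blocks
    (h1 : ∀ p p' : Fin n, blockStart n r δ p → blockStart n r δ p' → p < p' →
      (∀ q : Fin n, p < q → q < p' → ¬ blockStart n r δ q) →
      a p + (pSum n r δ p' - pSum n r δ p) ≤ a p')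
    (h2 : ∀ j : Fin n, ¬ blockStart n r δ j →
      ∀ i : Fin n, blockStart n r δ i → i < j →
        (∀ q : Fin n, blockStart n r δ q → q < j → q ≤ i) →
        a j = a i + (pSum n r δ j - pSum n r δ i)) :
    StepCond n r δ a := by
  intro m h
  obtain ⟨p, hpm, hp, hmax⟩ := exists_blockStart δ m (by omega)
  have hpm' : (p : ℕ) ≤ m := hpm
  have hlt : p < ⟨m + 1, h⟩ := by
    simp only [Fin.lt_def]
    omega
  have ham : a ⟨m, by omega⟩ = a p + (pSum n r δ ⟨m, by omega⟩ - pSum n r δ p) := by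
    rcases hpm.eq_or_lt with he | hl
    · rw [← he]
      ring
    · exact h2 _ (hmax _ hl le_rfl) p hp hl
        (fun q hq hqm => not_lt.1 fun hpq => hmax q hpq hqm.le hq)
  have hs := pSum_succ δ m h
  by_cases hb : blockStart n r δ ⟨m + 1, h⟩
  · have hr' : (δ ⟨m, by omega⟩ : ℕ) = r := hb (by simp)
    have := h1 p _ hp hb hlt (fun q hq hq' => hmax q hq (by
      simp only [Fin.lt_def, Fin.le_def] at *
      omega))
    omega
  · have := h2 _ hb p hp hlt (fun q hq hqm => not_lt.1 fun hpq => hmax q hpq (by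
      simp only [Fin.lt_def, Fin.le_def] at *
      omega) hq)
    omega

end

/-- Lemma 4.1 of the paper: the integer points of `P^{□}_{n,r}` of type
`δ` are exactly the integer points satisfying the conditions of `PdeltaCond`. -/
theorem rlex_of_type_iff (n : ℕ) (hn : 1 ≤ n) (s : ℤ) (hs : 0 ≤ s) (d1 d2 : ℤ)
    (r : ℕ) (hr : 1 ≤ r) (δ : Fin (n - 1) → Fin (r + 1)) (a b : Fin n → ℤ) :
    (RLexIncIn n s d1 d2 (r : ℤ) a b ∧ HasType n r δ a) ↔
      PdeltaCond n r s d1 d2 δ a b := by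
  constructor
  · rintro ⟨⟨-, hb, h0, hd, hbd⟩, ht⟩
    have H := hasType_iff.1 ht
    refine ⟨h0, ?_, ?_, ?_, ?_⟩
    · intro p p' _ _ hlt _
      have := H.diff p p' hlt.le
      omega
    · intro p _ hq
      have h1 := H.diff p ⟨n - 1, by omega⟩ (by
        have := p.isLt
        simp only [Fin.le_def]
        omega)
      have h2 := hd (by omega)
      have h3 := pSum_last δ (by omega)
      omega
    · intro j hj i _ hlt hmax
      refine H.diff_eq i j hlt.le fun q hq hqj hbq => ?_
      rcases hqj.eq_or_lt with he | hl
      · exact hj (he ▸ hbq)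
      · exact absurd (hmax q hbq hl) (not_le.2 hq)
    · rintro j j' ⟨hjj, hcs, hz, hce⟩
      refine ⟨?_, ?_, ?_⟩
      · rw [← H.left_sum]
        exact (hbd j).1
      · intro k hk hk' h
        refine hb k h ?_
        have h1 := H k h
        have h2 := hz k hk hk' (by omega)
        simp only [Fin.eta] at h1
        omega
      · -- `δ` vanishes between `j` and `j'`, and `0 < r`, so the gaps of `a` there are zero.
        have hp : ∀ m (hm : m < n), (j : ℕ) ≤ m → m ≤ (j' : ℕ) → a ⟨m, hm⟩ = a j := by
          intro m hm hjm
          induction m, hjm using Nat.le_induction with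
          | base => simp
          | succ m hjm ih =>
            intro hmj
            have h1 := ih (by omega) (by omega)
            have h2 := hz ⟨m, by omega⟩ hjm hmj (by simp only; omega)
            have h3 := H m hm
            simp only at h2
            omega
        have h1 := (hbd j').2
        rw [H.right_sum, hp j' j'.isLt hjj le_rfl] at h1
        exact h1
  · rintro ⟨h0, h1, h2, h3, h4⟩
    have H := StepCond.of_blocks h1 h3
    -- A vanishing `δ_m` puts `m` and `m + 1` in a common column.
    have hstep : ∀ m (h : m + 1 < n), (δ ⟨m, by omega⟩ : ℕ) = 0 →
        b ⟨m, by omega⟩ + (r : ℤ) ≤ b ⟨m + 1, h⟩ := by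
      intro m h hz
      obtain ⟨j, hj, hjs, hjz⟩ := exists_colStart δ m (by omega)
      obtain ⟨j', hj', hjz', hje⟩ := exists_colEnd δ (m + 1) h
      simp only [Fin.le_def] at hj hj'
      refine (h4 j j' ⟨?_, hjs, ?_, hje⟩).2.1 ⟨m, by omega⟩ hj ?_ h
      · simp only [Fin.le_def]
        omega
      · intro k hk hk' hkn
        rcases lt_trichotomy (k : ℕ) m with hl | he | hg
        · exact hjz k hk hl hkn
        · simpa only [he] using hz
        · exact hjz' k hg hk' hkn
      · simp only [Fin.lt_def]
        omega
    have hL : ∀ m (h : m < n), Lstat n r δ ⟨m, h⟩ ≤ b ⟨m, h⟩ := by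
      have hstart : ∀ m (h : m < n), colStart n r δ ⟨m, h⟩ →
          Lstat n r δ ⟨m, h⟩ ≤ b ⟨m, h⟩ := by
        intro m h hc
        obtain ⟨j', hj', hz, he⟩ := exists_colEnd δ m h
        exact (h4 _ j' ⟨hj', hc, hz, he⟩).1
      intro m
      induction m with
      | zero => exact fun h => hstart 0 h fun hh => absurd hh (by simp)
      | succ m ih =>
        intro h
        by_cases hz : (δ ⟨m, by omega⟩ : ℕ) = 0
        · rw [Lstat_succ m h hz]
          have e1 := hstep m h hz
          have e2 := ih (by omega)
          omega
        · exact hstart (m + 1) h fun _ => hz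
    have hR : ∀ t m (h : m < n), m + t + 1 = n →
        b ⟨m, h⟩ ≤ d2 + s * a ⟨m, h⟩ - Rstat n r δ ⟨m, h⟩ := by
      have hend : ∀ m (h : m < n), (∀ h' : m < n - 1, (δ ⟨m, h'⟩ : ℕ) ≠ 0) →
          b ⟨m, h⟩ ≤ d2 + s * a ⟨m, h⟩ - Rstat n r δ ⟨m, h⟩ := by
        intro m h hc
        obtain ⟨j, hj, hs', hz⟩ := exists_colStart δ m h
        have e1 := (h4 j _ ⟨hj, hs', hz, hc⟩).2.2
        have e2 := mul_le_mul_of_nonneg_left (H.monotone hj) hs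
        omega
      intro t
      induction t with
      | zero => exact fun m h hm => hend m h (fun h' => by omega)
      | succ t ih =>
        intro m h hm
        by_cases hz : (δ ⟨m, by omega⟩ : ℕ) = 0
        · have e1 := hstep m (by omega) hz
          have e2 := ih (m + 1) (by omega) (by omega)
          have e3 := Rstat_succ m (by omega) hz
          have e4 := (H m (by omega)).2 (by omega)
          have e5 : a ⟨m + 1, by omega⟩ = a ⟨m, h⟩ := by omega
          rw [e5] at e2
          omega
        · exact hend m h fun _ => hz
    refine ⟨⟨H.monotone, ?_, h0, ?_, ?_⟩, hasType_iff.2 H⟩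
    · rintro ⟨m, hm⟩ h he
      refine hstep m h ?_
      have := H m h
      simp only at he
      omega
    · intro _
      obtain ⟨p, hp, hps, hmax⟩ := exists_blockStart δ (n - 1) (by omega)
      have hle : ∀ q : Fin n, q ≤ ⟨n - 1, by omega⟩ := by
        intro q
        have := q.isLt
        simp only [Fin.le_def]
        omega
      have e1 := h2 p hps fun q hq => hmax q hq (hle q)
      have e2 := H.diff_eq p ⟨n - 1, by omega⟩ hp hmax
      rw [pSum_last] at e2
      omega
    · rintro ⟨m, hm⟩
      rw [H.left_sum, H.right_sum]
      exact ⟨hL m hm, hR (n - 1 - m) m hm (by omega)⟩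

end
end
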